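/- arXiv:2203.15878 — 3 statements merged into one kernel-verified Lean document; each statement's English description precedes it below -/
import Mathlib

section
/- A finite connected simple graph G is a convex geometry with respect to the geodetic convexity if and only if G is Ptolemaic, i.e., G is chordal and contains no induced subgraph isomorphic to the gem. -/
open SimpleGraph

variable {V : Type*} {W : Type*}

/-- The convex hull of `S`: the smallest convex set containing `S`. -/
def chull (Cvx : Set V → Prop) (S : Set V) : Set V := ⋂₀ {T | S ⊆ T ∧ Cvx T}

/-- The set of extreme vertices of `S`. -/
def extremeSet (Cvx : Set V → Prop) (S : Set V) : Set V := {x | x ∈ S ∧ Cvx (S \ {x})}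

/-- A convexity is a convex geometry if every convex set is the convex hull
of its extreme vertices. -/
def IsConvexGeometry (Cvx : Set V → Prop) : Prop :=
  ∀ S : Set V, Cvx S → S = chull Cvx (extremeSet Cvx S)

/-- Convexity induced by a system of p-walks: `S` is convex iff every vertex
lying on a p-walk between two vertices of `S` belongs to `S`. -/
def PConvex (G : SimpleGraph V) (P : ∀ ⦃u v : V⦄, G.Walk u v → Prop) (S : Set V) : Prop :=
  ∀ ⦃u v : V⦄, u ∈ S → v ∈ S → ∀ w : G.Walk u v, P w → ∀ x ∈ w.support, x ∈ S

/-- `x` and `y` appear consecutively (in either order) in the list `l`. -/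
def consecIn (l : List V) (x y : V) : Prop := [x, y] <:+: l ∨ [y, x] <:+: l

/-- An induced path: a path such that the only edges of `G` between its vertices
are the consecutive ones. -/
def IsInducedPathW (G : SimpleGraph V) {u v : V} (w : G.Walk u v) : Prop :=
  w.IsPath ∧ ∀ x ∈ w.support, ∀ y ∈ w.support, G.Adj x y → consecIn w.support x y

/-- An induced cycle: a cycle such that the only edges of `G` between its vertices
are the consecutive (cyclically) ones. -/
def IsInducedCycleW (G : SimpleGraph V) {u : V} (w : G.Walk u u) : Prop :=
  w.IsCycle ∧ ∀ x ∈ w.support, ∀ y ∈ w.support, G.Adj x y → consecIn w.support x y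

/-- A graph is chordal if it has no induced cycle of length at least 4. -/
def Chordal (G : SimpleGraph V) : Prop :=
  ¬ ∃ (u : V) (w : G.Walk u u), IsInducedCycleW G w ∧ 4 ≤ w.length

/-- The cycle `w` has an odd chord: an edge of `G` joining two vertices of the cycle
whose distance along the cycle is odd and greater than 1. -/
def HasOddChord (G : SimpleGraph V) {u : V} (w : G.Walk u u) : Prop :=
  ∃ i j : ℕ, ∃ hi : i < w.support.length, ∃ hj : j < w.support.length, i < j ∧
    G.Adj (w.support.get ⟨i, hi⟩) (w.support.get ⟨j, hj⟩) ∧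
    Odd (min (j - i) (w.length - (j - i))) ∧ 1 < min (j - i) (w.length - (j - i))

/-- A graph is strongly chordal if it is chordal and every even cycle of length
at least 6 has an odd chord. -/
def StronglyChordal (G : SimpleGraph V) : Prop :=
  Chordal G ∧ ∀ (u : V) (w : G.Walk u u), w.IsCycle → Even w.length → 6 ≤ w.length →
    HasOddChord G w

/-- Closed neighborhood `N[v]`. -/
def closedNbhd (G : SimpleGraph V) (v : V) : Set V := insert v (G.neighborSet v)

/-- A vertex is simple if the closed neighborhoods of its closed neighbors form a
family totally ordered by inclusion. -/
def SimpleVtx (G : SimpleGraph V) (v : V) : Prop :=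
  ∀ u ∈ closedNbhd G v, ∀ w ∈ closedNbhd G v,
    closedNbhd G u ⊆ closedNbhd G w ∨ closedNbhd G w ⊆ closedNbhd G u

/-- A vertex is simplicial if its closed neighborhood is a clique. -/
def SimplicialVtx (G : SimpleGraph V) (v : V) : Prop :=
  G.IsClique (closedNbhd G v)

/-- An even-chorded path: a path with no odd chord and such that no endpoint
lies in a chord. -/
def IsEvenChorded (G : SimpleGraph V) {u v : V} (w : G.Walk u v) : Prop :=
  w.IsPath ∧ ∀ i j : ℕ, ∀ hi : i < w.support.length, ∀ hj : j < w.support.length,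
    i + 1 < j → G.Adj (w.support.get ⟨i, hi⟩) (w.support.get ⟨j, hj⟩) →
      Even (j - i) ∧ 0 < i ∧ j < w.support.length - 1

/-- A tolled walk `u₀u₁…u_k`: `u₀uᵢ ∈ E(G)` implies `i = 1` and `u_ju_k ∈ E(G)`
implies `j = k - 1`. -/
def IsTolledWalk (G : SimpleGraph V) {u v : V} (w : G.Walk u v) : Prop :=
  ∀ i : ℕ, ∀ hi : i < w.support.length,
    (G.Adj u (w.support.get ⟨i, hi⟩) → i = 1) ∧
    (G.Adj (w.support.get ⟨i, hi⟩) v → i = w.support.length - 2)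

/-- A weakly toll walk `u₀u₁…u_k`: `u₀uᵢ ∈ E(G)` implies `uᵢ = u₁` and
`u_ju_k ∈ E(G)` implies `u_j = u_{k-1}`. -/
def IsWeaklyTollWalk (G : SimpleGraph V) {u v : V} (w : G.Walk u v) : Prop :=
  ∀ i : ℕ, ∀ hi : i < w.support.length,
    (G.Adj u (w.support.get ⟨i, hi⟩) → w.support.get ⟨i, hi⟩ = w.support.getD 1 u) ∧
    (G.Adj (w.support.get ⟨i, hi⟩) v → w.support.get ⟨i, hi⟩ = w.support.getD (w.support.length - 2) v)

/-- An interval graph: vertices can be assigned nonempty closed real intervals so that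
distinct vertices are adjacent iff the intervals intersect. -/
def IsIntervalGraph (G : SimpleGraph V) : Prop :=
  ∃ a b : V → ℝ, (∀ v, a v ≤ b v) ∧
    ∀ u v : V, u ≠ v →
      (G.Adj u v ↔ (Set.Icc (a u) (b u) ∩ Set.Icc (a v) (b v)).Nonempty)

/-- A proper interval graph: an interval model in which no interval properly
contains another. -/
def IsProperIntervalGraph (G : SimpleGraph V) : Prop :=
  ∃ a b : V → ℝ, (∀ v, a v ≤ b v) ∧
    (∀ u v : V, u ≠ v →
      (G.Adj u v ↔ (Set.Icc (a u) (b u) ∩ Set.Icc (a v) (b v)).Nonempty)) ∧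
    ∀ u v : V, ¬ (Set.Icc (a u) (b u) ⊂ Set.Icc (a v) (b v))

/-- An end vertex: some interval model in which its interval is an end interval. -/
def IsEndVertex (G : SimpleGraph V) (x : V) : Prop :=
  ∃ a b : V → ℝ, (∀ v, a v ≤ b v) ∧
    (∀ u v : V, u ≠ v →
      (G.Adj u v ↔ (Set.Icc (a u) (b u) ∩ Set.Icc (a v) (b v)).Nonempty)) ∧
    ((∀ v, a x ≤ a v) ∨ (∀ v, b v ≤ b x))

/-- `G` contains an induced subgraph isomorphic to `H`. -/
def HasInducedSubgraphIso (G : SimpleGraph V) (H : SimpleGraph W) : Prop :=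
  ∃ f : W ↪ V, ∀ a b : W, G.Adj (f a) (f b) ↔ H.Adj a b

def gemGraph : SimpleGraph (Fin 5) :=
  SimpleGraph.fromRel fun a b =>
    ((a : ℕ), (b : ℕ)) ∈ [(0,1),(1,2),(2,3),(4,0),(4,1),(4,2),(4,3)]

def houseGraph : SimpleGraph (Fin 5) :=
  SimpleGraph.fromRel fun a b =>
    ((a : ℕ), (b : ℕ)) ∈ [(0,1),(1,2),(2,3),(0,3),(0,4),(1,4)]

def dominoGraph : SimpleGraph (Fin 6) :=
  SimpleGraph.fromRel fun a b =>
    ((a : ℕ), (b : ℕ)) ∈ [(0,1),(1,2),(2,3),(0,3),(2,4),(4,5),(3,5)]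

def aGraph : SimpleGraph (Fin 6) :=
  SimpleGraph.fromRel fun a b =>
    ((a : ℕ), (b : ℕ)) ∈ [(0,1),(1,2),(2,3),(0,3),(2,4),(3,5)]

/-- A triangle path: a path such that any two of its vertices at distance
greater than 2 along the path are non-adjacent in `G`. -/
def IsTrianglePath (G : SimpleGraph V) {u v : V} (w : G.Walk u v) : Prop :=
  w.IsPath ∧ ∀ i j : ℕ, ∀ hi : i < w.support.length, ∀ hj : j < w.support.length,
    i + 2 < j → ¬ G.Adj (w.support.get ⟨i, hi⟩) (w.support.get ⟨j, hj⟩)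

/-- `S` is `H`-free convex. -/
def HFreeConvex [Fintype W] (G : SimpleGraph V) (H : SimpleGraph W) (S : Set V) : Prop :=
  ∀ (S' : Finset V), ↑S' ⊆ S → S'.card = Fintype.card W - 1 →
    ∀ x : V, Nonempty ((G.induce (↑S' ∪ {x} : Set V)) ≃g H) → x ∈ S

/-- `a b c d` is an induced path on four vertices of `G`. -/
def InducedP4 (G : SimpleGraph V) (a b c d : V) : Prop :=
  G.Adj a b ∧ G.Adj b c ∧ G.Adj c d ∧ ¬ G.Adj a c ∧ ¬ G.Adj a d ∧ ¬ G.Adj b d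

/-- Every connected component of `G` is a star. -/
def StarForest (G : SimpleGraph V) : Prop :=
  ∀ v : V, ∃ c : V, G.Reachable v c ∧ (∀ x, G.Reachable c x → x ≠ c → G.Adj c x) ∧
    ∀ x y, G.Adj c x → G.Adj c y → ¬ G.Adj x y

/-- An induced `n`-gem in `G`: `x 0, …, x n` is an induced path and `u` is adjacent
to all of them, the whole forming an induced subgraph of `G`. -/
def IsInducedNGem (G : SimpleGraph V) (n : ℕ) (x : Fin (n + 1) → V) (u : V) : Prop :=
  Function.Injective x ∧ (∀ i, x i ≠ u) ∧
  (∀ i j, G.Adj (x i) (x j) ↔ ((i : ℕ) + 1 = (j : ℕ) ∨ (j : ℕ) + 1 = (i : ℕ))) ∧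
  (∀ i, G.Adj u (x i))

/-- The induced `n`-gem is solved: there is an induced path of length 3 in `G`
connecting `x 0` and `x n` that avoids `u`. -/
def GemSolved (G : SimpleGraph V) (n : ℕ) (x : Fin (n + 1) → V) (u : V) : Prop :=
  ∃ w : G.Walk (x 0) (x (Fin.last n)), IsInducedPathW G w ∧ w.length = 3 ∧ u ∉ w.support

/-- Metric form of geodetic convexity. -/
def GC (G : SimpleGraph V) (S : Set V) : Prop :=
  ∀ u ∈ S, ∀ v ∈ S, ∀ x, G.dist u x + G.dist x v = G.dist u v → x ∈ S

theorem dist_add_of_mem_geod {G : SimpleGraph V} (hconn : G.Connected) {u v : V}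
    (w : G.Walk u v) (hw : w.length = G.dist u v) {x : V} (hx : x ∈ w.support) :
    G.dist u x + G.dist x v = G.dist u v := by
  classical
  have h1 := G.dist_le (w.takeUntil x hx)
  have h2 := G.dist_le (w.dropUntil x hx)
  have h3 : (w.takeUntil x hx).length + (w.dropUntil x hx).length = w.length := by
    rw [← Walk.length_append, Walk.take_spec]
  have h4 : G.dist u v ≤ G.dist u x + G.dist x v := hconn.dist_triangle
  omega

theorem pconvex_iff {G : SimpleGraph V} (hconn : G.Connected) (S : Set V) :
    PConvex G (fun u v w => w.IsPath ∧ w.length = G.dist u v) S ↔ GC G S := by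
  constructor
  · intro h u hu v hv x hx
    obtain ⟨p, hp⟩ := hconn.exists_walk_length_eq_dist u x
    obtain ⟨q, hq⟩ := hconn.exists_walk_length_eq_dist x v
    have hl : (p.append q).length = G.dist u v := by rw [Walk.length_append]; omega
    exact h hu hv (p.append q) ⟨Walk.isPath_of_length_eq_dist _ hl, hl⟩ x (by simp)
  · intro h u v hu hv w hw x hx
    exact h u hu v hv x (dist_add_of_mem_geod hconn w hw.2 hx)

theorem consec_getVert {G : SimpleGraph V} {u v : V} (w : G.Walk u v) (i : ℕ) (hi : i < w.length) :
    [w.getVert i, w.getVert (i+1)] <:+: w.support := by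
  refine ⟨w.support.take i, w.support.drop (i+2), ?_⟩
  have hl : w.support.length = w.length + 1 := w.length_support
  have e1 := w.getVert_eq_support_getElem (n := i) (by omega)
  have e2 := w.getVert_eq_support_getElem (n := i + 1) (by omega)
  rw [e1, e2]
  have h1 := List.drop_eq_getElem_cons (l := w.support) (i := i) (by omega)
  have h2 := List.drop_eq_getElem_cons (l := w.support) (i := i + 1) (by omega)
  rw [h2] at h1
  conv_rhs => rw [← List.take_append_drop i w.support, h1]
  simp

theorem getVert_of_infix {G : SimpleGraph V} {u v x y : V} (w : G.Walk u v)
    (h : [x, y] <:+: w.support) : ∃ i < w.length, w.getVert i = x ∧ w.getVert (i+1) = y := by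
  obtain ⟨s, t, h⟩ := h
  have hl : w.support.length = w.length + 1 := w.length_support
  have hs : s.length + 2 + t.length = w.length + 1 := by
    rw [← hl, ← h]; simp; omega
  refine ⟨s.length, by omega, ?_, ?_⟩
  · rw [w.getVert_eq_support_getElem (by omega)]
    simp [← h]
  · rw [w.getVert_eq_support_getElem (by omega)]
    simp [← h]

theorem chordal_key {G : SimpleGraph V} (hch : Chordal G) {y p q : V} (hp : G.Adj y p)
    (hq : G.Adj y q) (hpq : p ≠ q) (w : G.Walk p q)
    (hw : ∀ x ∈ w.support, x = p ∨ x = q ∨ (x ≠ y ∧ ¬ G.Adj y x)) : G.Adj p q := by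
  classical
  by_contra hna
  let Q : ℕ → Prop := fun n => ∃ w : G.Walk p q,
    (∀ x ∈ w.support, x = p ∨ x = q ∨ (x ≠ y ∧ ¬ G.Adj y x)) ∧ w.length = n
  have hQ : ∃ n, Q n := ⟨_, w, hw, rfl⟩
  obtain ⟨w0, hw0, hl0⟩ := Nat.find_spec hQ
  have hmin : ∀ w' : G.Walk p q,
      (∀ x ∈ w'.support, x = p ∨ x = q ∨ (x ≠ y ∧ ¬ G.Adj y x)) → Nat.find hQ ≤ w'.length :=
    fun w' h' => Nat.find_min' hQ ⟨w', h', rfl⟩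
  set b := w0.bypass with hb
  have hbP : b.IsPath := w0.bypass_isPath
  have hbs : ∀ x ∈ b.support, x = p ∨ x = q ∨ (x ≠ y ∧ ¬ G.Adj y x) :=
    fun x hx => hw0 x (w0.support_bypass_subset_support hx)
  have hbl : b.length ≤ Nat.find hQ := hl0 ▸ w0.length_bypass_le_length
  have hyb : y ∉ b.support := by
    intro h
    rcases hbs y h with h | h | h
    · exact hp.ne h
    · exact hq.ne h
    · exact h.1 rfl
  have hlen : 2 ≤ b.length := by
    by_contra hlt
    have : b.length = 0 ∨ b.length = 1 := by omega
    rcases this with h | h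
    · exact hpq (Walk.eq_of_length_eq_zero h)
    · exact hna (Walk.adj_of_length_eq_one h)
  -- induced
  have hind : ∀ i j, i ≤ b.length → j ≤ b.length → i < j → G.Adj (b.getVert i) (b.getVert j) →
      j = i + 1 := by
    intro i j hi hj hij hadj
    by_contra hne
    have := hmin ((b.take i).append (Walk.cons hadj (b.drop j))) (by
      intro x hx
      apply hbs
      rw [Walk.mem_support_append_iff, Walk.support_cons, List.mem_cons] at hx
      rcases hx with hx | rfl | hx
      · exact (b.isSubwalk_take i).support_subset hx
      · exact b.getVert_mem_support i
      · exact (b.isSubwalk_drop j).support_subset hx)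
    rw [Walk.length_append, Walk.length_cons, Walk.take_length, Walk.drop_length] at this
    omega
  have hindc : ∀ x ∈ b.support, ∀ z ∈ b.support, G.Adj x z → consecIn b.support x z := by
    intro x hx z hz hxz
    obtain ⟨i, rfl, hi⟩ := Walk.mem_support_iff_exists_getVert.1 hx
    obtain ⟨j, rfl, hj⟩ := Walk.mem_support_iff_exists_getVert.1 hz
    rcases lt_trichotomy i j with h | h | h
    · have := hind i j hi hj h hxz
      subst this
      exact Or.inl (consec_getVert b i (by omega))
    · subst h; exact (hxz.ne rfl).elim
    · have := hind j i hj hi h hxz.symm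
      subst this
      exact Or.inr (consec_getVert b j (by omega))
  set c : G.Walk y y := Walk.cons hp (b.concat hq.symm) with hc
  have hcs : c.support = y :: (b.support ++ [y]) := by
    simp [hc, Walk.support_concat]
  have hcyc : c.IsCycle := by
    rw [hc, Walk.cons_isCycle_iff]
    refine ⟨hbP.concat hyb _, ?_⟩
    rw [Walk.edges_concat]
    intro h
    simp only [List.concat_eq_append, List.mem_append, List.mem_singleton] at h
    rcases h with h | h
    · exact hyb (b.fst_mem_support_of_mem_edges h)
    · rw [Sym2.eq_iff] at h
      rcases h with h | h
      · exact hq.ne h.1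
      · exact hpq h.2
  obtain ⟨tp, htp⟩ : ∃ t, b.support = p :: t := ⟨_, b.cons_tail_support.symm⟩
  obtain ⟨tq, htq⟩ : ∃ t, b.support = t ++ [q] :=
    ⟨b.support.dropLast, by
      have h := List.dropLast_append_getLast b.support_ne_nil
      rw [b.getLast_support] at h
      exact h.symm⟩
  have hY : ∀ z ∈ b.support, G.Adj y z → consecIn c.support y z := by
    intro z hz hyz
    rcases hbs z hz with rfl | rfl | h
    · left; rw [hcs, htp]; exact ⟨[], tp ++ [y], by simp⟩
    · right; rw [hcs, htq]; exact ⟨y :: tq, [], by simp⟩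
    · exact (h.2 hyz).elim
  apply hch
  refine ⟨y, c, ⟨hcyc, ?_⟩, ?_⟩
  · intro x hx z hz hxz
    have hx' : x = y ∨ x ∈ b.support := by rw [hcs] at hx; simp at hx ⊢; tauto
    have hz' : z = y ∨ z ∈ b.support := by rw [hcs] at hz; simp at hz ⊢; tauto
    rcases hx' with rfl | hx'
    · rcases hz' with rfl | hz'
      · exact (hxz.ne rfl).elim
      · exact hY z hz' hxz
    · rcases hz' with rfl | hz'
      · exact (hY x hx' hxz.symm).symm
      · have hsub : b.support <:+: c.support := ⟨[y], [y], by rw [hcs]; simp⟩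
        exact (hindc x hx' z hz' hxz).imp (fun h => h.trans hsub) (fun h => h.trans hsub)
  · simp [hc, Walk.length_concat]; omega

/-- A neighbour one step closer to `k`. -/
theorem exists_closer {G : SimpleGraph V} (hconn : G.Connected) {a k : V} {n : ℕ}
    (h : G.dist a k = n + 1) : ∃ p, G.Adj a p ∧ G.dist p k = n := by
  obtain ⟨w, hw⟩ := hconn.exists_walk_length_eq_dist a k
  cases w with
  | nil => rw [SimpleGraph.dist_self] at h; omega
  | @cons _ p _ hadj w' =>
    refine ⟨p, hadj, ?_⟩
    have h1 := G.dist_le w'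
    have h2 : G.dist a k ≤ G.dist a p + G.dist p k := hconn.dist_triangle
    rw [dist_eq_one_iff_adj.2 hadj] at h2
    rw [Walk.length_cons] at hw
    omega

theorem adj_dist_le {G : SimpleGraph V} (hconn : G.Connected) {a b : V} (h : G.Adj a b) (k : V) :
    G.dist a k ≤ G.dist b k + 1 := by
  have h2 : G.dist a k ≤ G.dist a b + G.dist b k := hconn.dist_triangle
  rw [dist_eq_one_iff_adj.2 h] at h2
  omega

theorem slice_adj {G : SimpleGraph V} (hconn : G.Connected) (hch : Chordal G) {y p q k : V} {n : ℕ}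
    (hy : G.dist y k = n + 1) (hp : G.dist p k = n) (hq : G.dist q k = n) (hyp : G.Adj y p)
    (hyq : G.Adj y q) (hpq : p ≠ q) : G.Adj p q := by
  obtain ⟨w1, h1⟩ := hconn.exists_walk_length_eq_dist p k
  obtain ⟨w2, h2⟩ := hconn.exists_walk_length_eq_dist q k
  have key : ∀ (r : V) (w : G.Walk r k), w.length = G.dist r k → G.dist r k = n →
      ∀ x ∈ w.support, x = r ∨ (x ≠ y ∧ ¬ G.Adj y x) := by
    intro r w hw hr x hx
    have := dist_add_of_mem_geod hconn w hw hx
    by_cases hxr : x = r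
    · exact Or.inl hxr
    · have hpos := hconn.pos_dist_of_ne (Ne.symm hxr)
      refine Or.inr ⟨?_, ?_⟩
      · rintro rfl; omega
      · intro hadj
        have := adj_dist_le hconn hadj k
        omega
  refine chordal_key hch hyp hyq hpq (w1.append w2.reverse) ?_
  intro x hx
  rw [Walk.mem_support_append_iff, Walk.support_reverse, List.mem_reverse] at hx
  rcases hx with hx | hx
  · have := key p w1 h1 hp x hx; tauto
  · have := key q w2 h2 hq x hx; tauto

theorem triangle_cond {G : SimpleGraph V} (hconn : G.Connected) (hch : Chordal G) {a b k : V}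
    {n : ℕ} (ha : G.dist a k = n + 1) (hb : G.dist b k = n + 1) (hab : G.Adj a b) :
    ∃ c, G.Adj a c ∧ G.Adj b c ∧ G.dist c k = n := by
  obtain ⟨p, hap, hp⟩ := exists_closer hconn ha
  obtain ⟨q, hbq, hq⟩ := exists_closer hconn hb
  by_cases haq : G.Adj a q
  · exact ⟨q, haq, hbq, hq⟩
  refine ⟨p, hap, ?_, hp⟩
  obtain ⟨w1, h1⟩ := hconn.exists_walk_length_eq_dist p k
  obtain ⟨w2, h2⟩ := hconn.exists_walk_length_eq_dist q k
  have key : ∀ (r : V) (w : G.Walk r k), w.length = G.dist r k → G.dist r k = n →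
      ∀ x ∈ w.support, x = r ∨ (x ≠ a ∧ ¬ G.Adj a x) := by
    intro r w hw hr x hx
    have := dist_add_of_mem_geod hconn w hw hx
    by_cases hxr : x = r
    · exact Or.inl hxr
    · have hpos := hconn.pos_dist_of_ne (Ne.symm hxr)
      refine Or.inr ⟨?_, ?_⟩
      · rintro rfl; omega
      · intro hadj
        have := adj_dist_le hconn hadj k
        omega
  have hpb : p ≠ b := by rintro rfl; omega
  refine (chordal_key hch hap hab hpb ((w1.append w2.reverse).concat hbq.symm) ?_).symm
  intro x hx
  rw [Walk.support_concat, List.mem_append, Walk.mem_support_append_iff,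
    Walk.support_reverse, List.mem_reverse, List.mem_singleton] at hx
  rcases hx with (hx | hx) | hx
  · have := key p w1 h1 hp x hx; tauto
  · rcases key q w2 h2 hq x hx with rfl | h
    · refine Or.inr (Or.inr ⟨?_, haq⟩)
      rintro rfl; omega
    · tauto
  · tauto

theorem gem_of {G : SimpleGraph V} {a b c d e : V} (hab : G.Adj a b) (hbc : G.Adj b c)
    (hcd : G.Adj c d) (hea : G.Adj e a) (heb : G.Adj e b) (hec : G.Adj e c) (hed : G.Adj e d)
    (hac : ¬ G.Adj a c) (had : ¬ G.Adj a d) (hbd : ¬ G.Adj b d) :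
    HasInducedSubgraphIso G gemGraph := by
  have hne1 : a ≠ c := by rintro rfl; exact had hcd
  have hne2 : a ≠ d := by rintro rfl; exact hbd hab.symm
  have hne3 : b ≠ d := by rintro rfl; exact had hab
  have := hab.ne; have := hbc.ne; have := hcd.ne; have := hea.ne; have := heb.ne
  have := hec.ne; have := hed.ne
  have hca : ¬ G.Adj c a := fun h => hac h.symm
  have hda : ¬ G.Adj d a := fun h => had h.symm
  have hdb : ¬ G.Adj d b := fun h => hbd h.symm
  refine ⟨⟨![a, b, c, d, e], ?_⟩, ?_⟩
  · intro i j hij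
    fin_cases i <;> fin_cases j <;> simp_all
  · intro i j
    change G.Adj (![a, b, c, d, e] i) (![a, b, c, d, e] j) ↔ _
    fin_cases i <;> fin_cases j <;>
      simp [gemGraph, hab, hbc, hcd, hea, heb, hec, hed, hac, had, hbd, hab.symm, hbc.symm,
        hcd.symm, hea.symm, heb.symm, hec.symm, hed.symm, hca, hda, hdb]

theorem extend_convex [Finite V] {G : SimpleGraph V} (hconn : G.Connected) (hch : Chordal G)
    (hgem : ¬ HasInducedSubgraphIso G gemGraph) {K S : Set V} (hK : GC G K) (hS : GC G S)
    (hKS : K ⊂ S) : ∃ y ∈ S \ K, GC G (insert y K) := by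
  classical
  obtain ⟨s, hsS, hsK⟩ := Set.exists_of_ssubset hKS
  rcases K.eq_empty_or_nonempty with rfl | ⟨k0, hk0⟩
  · refine ⟨s, ⟨hsS, hsK⟩, ?_⟩
    intro u hu v hv x hx
    simp at hu hv ⊢
    rw [hu, hv] at hx
    rw [SimpleGraph.dist_self] at hx
    exact (hconn.dist_eq_zero_iff.1 (by omega : G.dist x s = 0))
  -- a vertex of S \ K adjacent to K
  obtain ⟨y0, ⟨hy0S, hy0K⟩, hy0min⟩ := Set.exists_min_image (S \ K) (fun z => G.dist z k0)
    (Set.toFinite _) ⟨s, hsS, hsK⟩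
  have hy0adj : ∃ a ∈ K, G.Adj y0 a := by
    have hpos : 0 < G.dist y0 k0 := hconn.pos_dist_of_ne (by rintro rfl; exact hy0K hk0)
    obtain ⟨n, hn⟩ : ∃ n, G.dist y0 k0 = n + 1 := ⟨G.dist y0 k0 - 1, by omega⟩
    obtain ⟨p, hp, hpd⟩ := exists_closer hconn hn
    refine ⟨p, ?_, hp⟩
    by_contra hpK
    have hpS : p ∈ S := hS y0 hy0S k0 (hKS.1 hk0) p (by
      rw [dist_eq_one_iff_adj.2 hp]; omega)
    have := hy0min p ⟨hpS, hpK⟩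
    omega
  obtain ⟨y, ⟨hyS, hyK⟩, hymax⟩ := Set.exists_max_image (S \ K)
    (fun z => (G.neighborSet z ∩ K).ncard) (Set.toFinite _) ⟨s, hsS, hsK⟩
  obtain ⟨a0, ha0K, ha0⟩ : ∃ a ∈ K, G.Adj y a := by
    obtain ⟨a, haK, ha⟩ := hy0adj
    have h1 := hymax y0 ⟨hy0S, hy0K⟩
    have h2 : 0 < (G.neighborSet y0 ∩ K).ncard :=
      (Set.ncard_pos (Set.toFinite _)).2 ⟨a, ha, haK⟩
    obtain ⟨b, hb, hbK⟩ := (Set.ncard_pos (Set.toFinite _)).1 (lt_of_lt_of_le h2 h1)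
    exact ⟨b, hbK, hb⟩
  refine ⟨y, ⟨hyS, hyK⟩, ?_⟩
  by_contra hbad
  have hbad' : ∃ k ∈ K, ∃ x, x ∉ K ∧ x ≠ y ∧ G.dist y x + G.dist x k = G.dist y k := by
    by_contra hno
    push Not at hno
    apply hbad
    intro u hu v hv x hx
    by_contra hxn
    simp only [Set.mem_insert_iff, not_or] at hxn
    rcases hu with rfl | hu
    · rcases hv with rfl | hv
      · rw [SimpleGraph.dist_self] at hx
        exact hxn.1 (hconn.dist_eq_zero_iff.1 (by omega : G.dist x v = 0))
      · exact hno v hv x hxn.2 hxn.1 hx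
    · rcases hv with rfl | hv
      · refine hno u hu x hxn.2 hxn.1 ?_
        rw [G.dist_comm (u := v) (v := x), G.dist_comm (u := x) (v := u),
          G.dist_comm (u := v) (v := u)]; omega
      · exact hxn.2 (hK u hu v hv x hx)
  obtain ⟨k, ⟨hkK, x, hxK, hxy, hxk⟩, hkmin⟩ := Set.exists_min_image
    {k | k ∈ K ∧ ∃ x, x ∉ K ∧ x ≠ y ∧ G.dist y x + G.dist x k = G.dist y k}
    (fun k => G.dist y k) (Set.toFinite _) (by obtain ⟨k, h1, h2⟩ := hbad'; exact ⟨k, h1, h2⟩)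
  -- first vertex toward x
  have hxpos : 0 < G.dist y x := hconn.pos_dist_of_ne (Ne.symm hxy)
  obtain ⟨n, hn⟩ : ∃ n, G.dist y x = n + 1 := ⟨G.dist y x - 1, by omega⟩
  obtain ⟨p, hyp, hpx⟩ := exists_closer hconn hn
  have hpk1 : G.dist p k ≤ G.dist p x + G.dist x k := hconn.dist_triangle
  have hpk2 := adj_dist_le hconn hyp k
  have hpK : p ∉ K := by
    intro hp
    apply hxK
    exact hK p hp k hkK x (by omega)
  have hpne : p ≠ k := by rintro rfl; exact hpK hkK
  have hpkpos := hconn.pos_dist_of_ne hpne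
  obtain ⟨m, hpm⟩ : ∃ m, G.dist p k = m + 1 := ⟨G.dist p k - 1, by omega⟩
  have hym : G.dist y k = m + 2 := by omega
  have hpS : p ∈ S := hS y hyS k (hKS.1 hkK) p (by rw [dist_eq_one_iff_adj.2 hyp]; omega)
  -- a general neighbour a of y in K
  have hstep : ∀ a ∈ K, G.Adj y a → G.dist a k = m + 1 ∨ G.dist a k = m + 2 := by
    intro a haK hya
    have h1 := adj_dist_le hconn hya k
    have h2 := adj_dist_le hconn hya.symm k
    by_contra hcon
    apply hyK
    refine hK a haK k hkK y ?_
    rw [dist_eq_one_iff_adj.2 hya.symm]; omega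
  have hgo : ∀ a ∈ K, G.Adj y a → G.dist a k = m + 2 →
      ∃ c ∈ K, G.Adj y c ∧ G.Adj a c ∧ G.dist c k = m + 1 := by
    intro a haK hya had
    obtain ⟨c, hac, hyc, hc⟩ := triangle_cond hconn hch had hym hya.symm
    exact ⟨c, hK a haK k hkK c (by rw [dist_eq_one_iff_adj.2 hac]; omega), hyc, hac, hc⟩
  rcases Nat.eq_zero_or_pos m with hm | hm
  · subst hm
    have hpk : G.Adj p k := dist_eq_one_iff_adj.1 (by omega)
    have hyk : ¬ G.Adj y k := by
      intro h
      have := dist_eq_one_iff_adj.2 h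
      omega
    have hsub : ∀ a ∈ K, G.Adj y a → G.Adj p a := by
      intro a haK hya
      have hpa : p ≠ a := by rintro rfl; exact hpK haK
      rcases hstep a haK hya with h | h
      · exact slice_adj hconn hch hym hpm h hyp hya hpa
      · exfalso
        obtain ⟨c, hcK, hyc, hac, hc⟩ := hgo a haK hya h
        have hpc : p ≠ c := by rintro rfl; exact hpK hcK
        have hpcA := slice_adj hconn hch hym hpm hc hyp hyc hpc
        have hck : G.Adj c k := dist_eq_one_iff_adj.1 (by omega)
        have hap : ¬ G.Adj a p := by
          intro hap
          exact hpK (hK a haK k hkK p (by rw [dist_eq_one_iff_adj.2 hap]; omega))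
        have hak : ¬ G.Adj a k := by
          intro h
          have := dist_eq_one_iff_adj.2 h
          omega
        exact hgem (gem_of hya.symm hyp hpk hac.symm hyc.symm hpcA.symm hck hap hak hyk)
    have hlt : (G.neighborSet y ∩ K).ncard < (G.neighborSet p ∩ K).ncard := by
      apply Set.ncard_lt_ncard _ (Set.toFinite _)
      refine ⟨fun a ha => ⟨hsub a ha.2 ha.1, ha.2⟩, fun h => ?_⟩
      exact hyk (h ⟨hpk, hkK⟩).1
    have := hymax p ⟨hpS, hpK⟩
    omega
  · obtain ⟨r, rfl⟩ : ∃ r, m = r + 1 := ⟨m - 1, by omega⟩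
    obtain ⟨a, haK, hya, had⟩ : ∃ a ∈ K, G.Adj y a ∧ G.dist a k = r + 1 + 1 := by
      rcases hstep a0 ha0K ha0 with h | h
      · exact ⟨a0, ha0K, ha0, h⟩
      · obtain ⟨c, h1, h2, _, h3⟩ := hgo a0 ha0K ha0 h
        exact ⟨c, h1, h2, h3⟩
    have hpa : p ≠ a := by rintro rfl; exact hpK haK
    have hpaA := slice_adj hconn hch hym hpm had hyp hya hpa
    obtain ⟨c, hac, hpc, hc⟩ := triangle_cond hconn hch had hpm hpaA.symm
    have hcK : c ∈ K := hK a haK k hkK c (by rw [dist_eq_one_iff_adj.2 hac]; omega)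
    obtain ⟨p2, hpp2, hp2⟩ := exists_closer hconn hpm
    have hp2K : p2 ∉ K := by
      intro hp2K
      have h1 := adj_dist_le hconn hyp p2
      rw [dist_eq_one_iff_adj.2 hpp2] at h1
      have h3 : G.dist y k ≤ G.dist y p2 + G.dist p2 k := hconn.dist_triangle
      have := hkmin p2 ⟨hp2K, p, hpK, hyp.ne', by
        rw [dist_eq_one_iff_adj.2 hyp, dist_eq_one_iff_adj.2 hpp2]; omega⟩
      omega
    have hcp2 : c ≠ p2 := by rintro rfl; exact hp2K hcK
    have hcA := slice_adj hconn hch hpm hc hp2 hpc hpp2 hcp2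
    have hyc : ¬ G.Adj y c := fun h => by have := adj_dist_le hconn h k; omega
    have hyp2 : ¬ G.Adj y p2 := fun h => by have := adj_dist_le hconn h k; omega
    have hap2 : ¬ G.Adj a p2 := by
      intro h
      exact hp2K (hK a haK k hkK p2 (by rw [dist_eq_one_iff_adj.2 h]; omega))
    exact hgem (gem_of hya hac hcA hyp.symm hpaA hpc hpp2 hyc hyp2 hap2)

theorem exists_extreme [Finite V] {G : SimpleGraph V} (hconn : G.Connected) (hch : Chordal G)
    (hgem : ¬ HasInducedSubgraphIso G gemGraph) {S : Set V} (hS : GC G S) :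
    ∀ (n : ℕ) (K : Set V), (S \ K).ncard = n → GC G K → K ⊂ S → ∃ x ∈ S \ K, GC G (S \ {x}) := by
  intro n
  induction n using Nat.strong_induction_on with
  | _ n ih =>
    intro K hn hK hKS
    obtain ⟨y, hy, hyK⟩ := extend_convex hconn hch hgem hK hS hKS
    have hsub : insert y K ⊆ S := Set.insert_subset hy.1 hKS.1
    rcases hsub.eq_or_ssubset with h | h
    · refine ⟨y, hy, ?_⟩
      rw [← h, Set.insert_sdiff_self_of_notMem hy.2]
      exact hK
    · have hlt : (S \ insert y K).ncard < n := by
        rw [← hn]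
        apply Set.ncard_lt_ncard _ (Set.toFinite _)
        refine ⟨fun a ha => ⟨ha.1, fun h => ha.2 (Set.mem_insert_of_mem _ h)⟩, fun h => ?_⟩
        exact (h hy).2 (Set.mem_insert _ _)
      obtain ⟨x, hx, hxc⟩ := ih _ hlt (insert y K) rfl hyK h
      exact ⟨x, ⟨hx.1, fun h => hx.2 (Set.mem_insert_of_mem _ h)⟩, hxc⟩

theorem gc_sInter {G : SimpleGraph V} (𝒯 : Set (Set V)) (h : ∀ T ∈ 𝒯, GC G T) : GC G (⋂₀ 𝒯) := by
  intro u hu v hv x hx T hT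
  exact h T hT u (hu T hT) v (hv T hT) x hx

theorem gc_chull {G : SimpleGraph V} (S : Set V) : GC G (chull (GC G) S) :=
  gc_sInter _ fun _ hT => hT.2

theorem subset_chull {G : SimpleGraph V} (S : Set V) : S ⊆ chull (GC G) S :=
  fun _ hx _ hT => hT.1 hx

theorem extreme_chull_subset {G : SimpleGraph V} (S : Set V) :
    extremeSet (GC G) (chull (GC G) S) ⊆ S := by
  intro x hx
  by_contra hxS
  have : x ∈ chull (GC G) S \ {x} := hx.1 _
    ⟨fun z hz => ⟨subset_chull S hz, by rintro rfl; exact hxS hz⟩, hx.2⟩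
  exact this.2 rfl

theorem dist_two {G : SimpleGraph V} (hconn : G.Connected) {s x t : V} (h1 : G.Adj s x)
    (h2 : G.Adj x t) (hne : s ≠ t) (hna : ¬ G.Adj s t) : G.dist s t = 2 := by
  have h3 := hconn.one_lt_dist_of_ne_of_not_adj hne hna
  have h4 := adj_dist_le hconn h1 t
  rw [dist_eq_one_iff_adj.2 h2] at h4
  omega

theorem not_extreme {G : SimpleGraph V} (hconn : G.Connected) {S : Set V} {s x t : V}
    (hs : s ∈ S) (ht : t ∈ S) (h1 : G.Adj s x)
    (h2 : G.Adj x t) (hne : s ≠ t) (hna : ¬ G.Adj s t) : x ∉ extremeSet (GC G) S := by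
  intro hx
  have := hx.2 s ⟨hs, h1.ne⟩ t ⟨ht, h2.ne'⟩ x (by
    rw [dist_two hconn h1 h2 hne hna, dist_eq_one_iff_adj.2 h1, dist_eq_one_iff_adj.2 h2])
  exact this.2 rfl

theorem cycle_nbrs {G : SimpleGraph V} {u : V} (w : G.Walk u u) (hw : IsInducedCycleW G w)
    (hlen : 4 ≤ w.length) {x : V} (hx : x ∈ w.support) :
    ∃ s ∈ w.support, ∃ t ∈ w.support, G.Adj s x ∧ G.Adj x t ∧ s ≠ t ∧ ¬ G.Adj s t := by
  have hinj : ∀ i j, 1 ≤ i → i ≤ w.length → 1 ≤ j → j ≤ w.length →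
      w.getVert i = w.getVert j → i = j := fun i j h1 h2 h3 h4 h =>
    hw.1.getVert_injOn ⟨h1, h2⟩ ⟨h3, h4⟩ h
  have h0 : w.getVert 0 = w.getVert w.length := by simp
  have hadj : ∀ i j, 1 ≤ i → i ≤ w.length → 1 ≤ j → j ≤ w.length →
      G.Adj (w.getVert i) (w.getVert j) →
      (j = i + 1 ∨ i = j + 1 ∨ (i = w.length ∧ j = 1) ∨ (j = w.length ∧ i = 1)) := by
    have aux : ∀ i j, 1 ≤ i → i ≤ w.length → 1 ≤ j → j ≤ w.length →
        [w.getVert i, w.getVert j] <:+: w.support → (j = i + 1 ∨ (i = w.length ∧ j = 1)) := by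
      intro i j h1 h2 h3 h4 h
      obtain ⟨l, hl, e1, e2⟩ := getVert_of_infix w h
      have e2' := hinj _ _ (by omega) (by omega) h3 h4 e2
      rcases Nat.eq_zero_or_pos l with hl0 | hl0
      · subst hl0
        rw [h0] at e1
        have := hinj _ _ (by omega) (by omega) h1 h2 e1
        omega
      · have := hinj _ _ (by omega) (by omega) h1 h2 e1
        omega
    intro i j h1 h2 h3 h4 h
    rcases hw.2 _ (w.getVert_mem_support i) _ (w.getVert_mem_support j) h with h | h
    · have := aux i j h1 h2 h3 h4 h; tauto
    · have := aux j i h3 h4 h1 h2 h; tauto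
  obtain ⟨i, hi1, hi2, rfl⟩ : ∃ i, 1 ≤ i ∧ i ≤ w.length ∧ w.getVert i = x := by
    obtain ⟨i, hi, hil⟩ := Walk.mem_support_iff_exists_getVert.1 hx
    rcases Nat.eq_zero_or_pos i with h | h
    · subst h
      exact ⟨w.length, by omega, le_rfl, by rw [← h0, hi]⟩
    · exact ⟨i, h, hil, hi⟩
  obtain ⟨j, hj1, hj2, hj, hjA⟩ : ∃ j, 1 ≤ j ∧ j ≤ w.length ∧
      ((2 ≤ i ∧ j = i - 1) ∨ (i = 1 ∧ j = w.length)) ∧ G.Adj (w.getVert j) (w.getVert i) := by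
    by_cases h : i = 1
    · subst h
      refine ⟨w.length, by omega, le_rfl, Or.inr ⟨rfl, rfl⟩, ?_⟩
      rw [← h0]
      exact w.adj_getVert_succ (by omega)
    · refine ⟨i - 1, by omega, by omega, Or.inl ⟨by omega, rfl⟩, ?_⟩
      have := w.adj_getVert_succ (i := i - 1) (by omega)
      rwa [Nat.sub_add_cancel hi1] at this
  obtain ⟨l, hl1, hl2, hl, hlA⟩ : ∃ l, 1 ≤ l ∧ l ≤ w.length ∧
      ((i < w.length ∧ l = i + 1) ∨ (i = w.length ∧ l = 1)) ∧
      G.Adj (w.getVert i) (w.getVert l) := by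
    by_cases h : i = w.length
    · refine ⟨1, le_rfl, by omega, Or.inr ⟨h, rfl⟩, ?_⟩
      rw [h, ← h0]
      exact w.adj_getVert_succ (by omega)
    · exact ⟨i + 1, by omega, by omega, Or.inl ⟨by omega, rfl⟩, w.adj_getVert_succ (by omega)⟩
  refine ⟨_, w.getVert_mem_support j, _, w.getVert_mem_support l, hjA, hlA, ?_, ?_⟩
  · intro h
    have := hinj _ _ hj1 hj2 hl1 hl2 h
    omega
  · intro h
    have := hadj _ _ hj1 hj2 hl1 hl2 h
    omega

theorem chordal_of_geom {G : SimpleGraph V} (hconn : G.Connected)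
    (hg : IsConvexGeometry (GC G)) : Chordal G := by
  rintro ⟨u, w, hw, hlen⟩
  set C : Set V := {x | x ∈ w.support} with hC
  have he : extremeSet (GC G) (chull (GC G) C) = ∅ := by
    rw [Set.eq_empty_iff_forall_notMem]
    intro x hx
    obtain ⟨s, hs, t, ht, h1, h2, h3, h4⟩ := cycle_nbrs w hw hlen (extreme_chull_subset C hx)
    exact not_extreme hconn (subset_chull C hs) (subset_chull C ht) h1 h2 h3 h4 hx
  have h := hg _ (gc_chull C)
  rw [he] at h
  have hu : u ∈ chull (GC G) C := subset_chull C (by simp [hC])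
  rw [h] at hu
  exact hu ∅ ⟨le_rfl, fun a ha => ha.elim⟩

theorem gemfree_of_geom {G : SimpleGraph V} (hconn : G.Connected)
    (hg : IsConvexGeometry (GC G)) (hch : Chordal G) : ¬ HasInducedSubgraphIso G gemGraph := by
  rintro ⟨f, hf⟩
  have hinj := f.injective
  set a := f 0 with ha
  set b := f 1 with hb
  set c := f 2 with hc
  set d := f 3 with hd
  set e := f 4 with he
  have hab : G.Adj a b := (hf 0 1).2 (by simp [gemGraph])
  have hbc : G.Adj b c := (hf 1 2).2 (by simp [gemGraph])
  have hcd : G.Adj c d := (hf 2 3).2 (by simp [gemGraph])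
  have hea : G.Adj e a := (hf 4 0).2 (by simp [gemGraph])
  have hed : G.Adj e d := (hf 4 3).2 (by simp [gemGraph])
  have hac : ¬ G.Adj a c := fun h => by have := (hf 0 2).1 h; simp [gemGraph] at this
  have had : ¬ G.Adj a d := fun h => by have := (hf 0 3).1 h; simp [gemGraph] at this
  have hbd : ¬ G.Adj b d := fun h => by have := (hf 1 3).1 h; simp [gemGraph] at this
  have nac : a ≠ c := fun h => absurd (hinj h) (by decide)
  have nad : a ≠ d := fun h => absurd (hinj h) (by decide)
  have nbd : b ≠ d := fun h => absurd (hinj h) (by decide)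
  set X : Set V := {a, b, c, d} with hX
  have hsub : extremeSet (GC G) (chull (GC G) X) ⊆ {a, d} := by
    intro x hx
    have hx' := extreme_chull_subset X hx
    simp only [hX, Set.mem_insert_iff, Set.mem_singleton_iff] at hx' ⊢
    rcases hx' with h | h | h | h
    · exact Or.inl h
    · exfalso
      rw [h] at hx
      exact not_extreme hconn (subset_chull X (by simp [hX])) (subset_chull X (by simp [hX]))
        hab hbc nac hac hx
    · exfalso
      rw [h] at hx
      exact not_extreme hconn (subset_chull X (by simp [hX])) (subset_chull X (by simp [hX]))
        hbc hcd nbd hbd hx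
    · exact Or.inr h
  -- the interval between a and d
  have hd2 : G.dist a d = 2 := dist_two hconn hea.symm hed nad had
  have hT : GC G {x | x = a ∨ x = d ∨ (G.Adj a x ∧ G.Adj x d)} := by
    have hcl : ∀ u v, u ≠ v → G.Adj a u → G.Adj u d → G.Adj a v → G.Adj v d → G.Adj u v := by
      intro u v huv h1 h2 h3 h4
      exact slice_adj hconn hch hd2 (dist_eq_one_iff_adj.2 h2) (dist_eq_one_iff_adj.2 h4) h1 h3 huv
    have triv : ∀ u v x, (u = v ∨ G.Adj u v) → G.dist u x + G.dist x v = G.dist u v →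
        x = u ∨ x = v := by
      intro u v x h hx
      have : G.dist u v ≤ 1 := by
        rcases h with rfl | h
        · simp
        · exact (dist_eq_one_iff_adj.2 h).le
      have : G.dist u x = 0 ∨ G.dist x v = 0 := by omega
      rcases this with h | h
      · exact Or.inl (hconn.dist_eq_zero_iff.1 h).symm
      · exact Or.inr (hconn.dist_eq_zero_iff.1 h)
    have mid : ∀ x, G.dist a x + G.dist x d = G.dist a d →
        x = a ∨ x = d ∨ (G.Adj a x ∧ G.Adj x d) := by
      intro x hx
      rw [hd2] at hx
      by_cases h1 : G.dist a x = 0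
      · exact Or.inl (hconn.dist_eq_zero_iff.1 h1).symm
      by_cases h2 : G.dist x d = 0
      · exact Or.inr (Or.inl (hconn.dist_eq_zero_iff.1 h2))
      · exact Or.inr (Or.inr ⟨dist_eq_one_iff_adj.1 (by omega), dist_eq_one_iff_adj.1 (by omega)⟩)
    intro u hu v hv x hx
    have fin : (u = v ∨ G.Adj u v) → x ∈ {x | x = a ∨ x = d ∨ (G.Adj a x ∧ G.Adj x d)} := by
      intro h
      rcases triv u v x h hx with h | h
      · rw [h]; exact hu
      · rw [h]; exact hv
    rcases hu with hu | hu | hu <;> rcases hv with hv | hv | hv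
    · exact fin (Or.inl (hu.trans hv.symm))
    · rw [hu, hv] at hx; exact mid x hx
    · exact fin (Or.inr (by rw [hu]; exact hv.1))
    · rw [hu, hv] at hx
      refine mid x ?_
      rw [G.dist_comm (u := a) (v := x), G.dist_comm (u := x) (v := d),
        G.dist_comm (u := a) (v := d)]; omega
    · exact fin (Or.inl (hu.trans hv.symm))
    · exact fin (Or.inr (by rw [hu]; exact hv.2.symm))
    · exact fin (Or.inr (by rw [hv]; exact hu.1.symm))
    · exact fin (Or.inr (by rw [hv]; exact hu.2))
    · by_cases huv : u = v
      · exact fin (Or.inl huv)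
      · exact fin (Or.inr (hcl u v huv hu.1 hu.2 hv.1 hv.2))
  have hbX : b ∈ chull (GC G) X := subset_chull X (by simp [hX])
  rw [hg _ (gc_chull X)] at hbX
  have := hbX _ ⟨fun x hx => by
    rcases hsub hx with h | h
    · exact Or.inl h
    · exact Or.inr (Or.inl h), hT⟩
  rcases this with h | h | h
  · exact hab.ne h.symm
  · exact nbd h
  · exact hbd h.2

/-- A finite connected simple graph `G` is a convex geometry with respect to
the geodetic convexity if and only if `G` is Ptolemaic (chordal and gem-free). -/
theorem geodetic_convex_geometry_iff_ptolemaic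
    {V : Type*} [Fintype V] (G : SimpleGraph V) (hconn : G.Connected) :
    IsConvexGeometry (PConvex G (fun u v w => w.IsPath ∧ w.length = G.dist u v)) ↔
      (Chordal G ∧ ¬ HasInducedSubgraphIso G gemGraph) := by
  have hEq : PConvex G (fun u v w => w.IsPath ∧ w.length = G.dist u v) = GC G := by
    funext S
    exact propext (pconvex_iff hconn S)
  rw [hEq]
  constructor
  · intro hg
    have hch := chordal_of_geom hconn hg
    exact ⟨hch, gemfree_of_geom hconn hg hch⟩
  · rintro ⟨hch, hgem⟩ S hS
    have hsub : chull (GC G) (extremeSet (GC G) S) ⊆ S :=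
      fun x hx => hx S ⟨fun z hz => hz.1, hS⟩
    by_contra hne
    obtain ⟨x, hx, hxc⟩ := exists_extreme hconn hch hgem hS _ _ rfl (gc_chull _)
      (hsub.ssubset_of_ne (Ne.symm hne))
    exact hx.2 (subset_chull _ ⟨hx.1, hxc⟩)
end

section
/- A finite simple graph G is strongly chordal if and only if every induced subgraph of G on a nonempty vertex set contains a simple vertex. -/
open SimpleGraph

variable {V : Type*} {W : Type*}

section StronglyChordalProof

theorem sc_infix_pair {α : Type*} (l : List α) (x y : α) :
    [x, y] <:+: l ↔ ∃ i, l[i]? = some x ∧ l[i + 1]? = some y := by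
  constructor
  · rintro ⟨s, t, rfl⟩
    refine ⟨s.length, by simp, by simp⟩
  · rintro ⟨i, hx, hy⟩
    obtain ⟨h1, rfl⟩ := List.getElem?_eq_some_iff.1 hx
    obtain ⟨h2, rfl⟩ := List.getElem?_eq_some_iff.1 hy
    refine ⟨l.take i, l.drop (i + 2), ?_⟩
    have e : l.drop i = l[i] :: l[i + 1] :: l.drop (i + 2) := by
      rw [List.drop_eq_getElem_cons h1, List.drop_eq_getElem_cons h2]
    calc l.take i ++ [l[i], l[i + 1]] ++ l.drop (i + 2) = l.take i ++ l.drop i := by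
          rw [e]; simp
      _ = l := List.take_append_drop i l

theorem sc_infix_support {α : Type*} {G : SimpleGraph α} {u v : α} (w : G.Walk u v) (x y : α) :
    [x, y] <:+: w.support ↔ ∃ i, i < w.length ∧ w.getVert i = x ∧ w.getVert (i + 1) = y := by
  rw [sc_infix_pair]
  constructor
  · rintro ⟨i, hx, hy⟩
    have hi : i < w.length := by
      obtain ⟨h2, -⟩ := List.getElem?_eq_some_iff.1 hy
      rw [Walk.length_support] at h2
      omega
    rw [← Walk.getVert_eq_support_getElem? w (by omega)] at hx hy
    exact ⟨i, hi, Option.some.inj hx, Option.some.inj hy⟩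
  · rintro ⟨i, hi, rfl, rfl⟩
    exact ⟨i, (Walk.getVert_eq_support_getElem? w (by omega)).symm,
      (Walk.getVert_eq_support_getElem? w (by omega)).symm⟩

theorem sc_seqWalk {α : Type*} (G : SimpleGraph α) (n : ℕ) (f : ℕ → α)
    (h : ∀ i < n, G.Adj (f i) (f (i + 1))) :
    ∃ w : G.Walk (f 0) (f n), w.length = n ∧ ∀ i ≤ n, w.getVert i = f i := by
  induction n generalizing f with
  | zero => exact ⟨Walk.nil, rfl, fun i hi => by simp [Nat.le_zero.1 hi]⟩
  | succ n ih =>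
    obtain ⟨w, hw, hv⟩ := ih (fun i => f (i + 1)) (fun i hi => h (i + 1) (by omega))
    refine ⟨Walk.cons (h 0 (by omega)) w, by simp [hw], ?_⟩
    intro i hi
    cases i with
    | zero => simp
    | succ i => simpa using hv i (by omega)

theorem sc_cycle {α : Type*} (G : SimpleGraph α) (n : ℕ) (hn : 3 ≤ n) (f : ℕ → α)
    (h : ∀ i < n, G.Adj (f i) (f (i + 1))) (h0 : f n = f 0)
    (hinj : ∀ i < n, ∀ j < n, f i = f j → i = j) :
    ∃ w : G.Walk (f 0) (f 0), w.IsCycle ∧ w.length = n ∧ ∀ i ≤ n, w.getVert i = f i := by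
  obtain ⟨w, hl, hv⟩ := sc_seqWalk G n f h
  refine ⟨w.copy rfl h0, ?_, by simpa using hl, by simpa using hv⟩
  rw [Walk.isCycle_iff_isPath_tail_and_le_length]
  refine ⟨?_, by simpa [hl] using hn⟩
  rw [← Walk.IsPath.getVert_injOn_iff]
  have hlt : (w.copy rfl h0).tail.length + 1 = n := by
    rw [Walk.length_tail_add_one]
    · simpa using hl
    · rw [Walk.not_nil_iff_lt_length]; simp [hl]; omega
  intro i hi j hj hij
  simp only [Set.mem_ofPred_eq] at hi hj
  simp only [Walk.getVert_tail, Walk.getVert_copy] at hij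
  rw [hv _ (by omega), hv _ (by omega)] at hij
  by_cases h1 : i + 1 = n <;> by_cases h2 : j + 1 = n
  · omega
  · rw [h1, h0] at hij
    have := hinj 0 (by omega) (j + 1) (by omega) hij
    omega
  · rw [h2, h0] at hij
    have := hinj (i + 1) (by omega) 0 (by omega) hij
    omega
  · have := hinj (i + 1) (by omega) (j + 1) (by omega) hij
    omega

/-- In a chordal graph, two nonadjacent neighbours of `v` are not connected outside `N[v]`. -/
theorem sc_chordal_sep {α : Type*} (G : SimpleGraph α) (hG : Chordal G) (v a b : α)
    (ha : G.Adj v a) (hb : G.Adj v b) (hab : a ≠ b) (hnab : ¬ G.Adj a b)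
    (S : Set α) (hS : ∀ x ∈ S, x ≠ a → x ≠ b → x ≠ v ∧ ¬ G.Adj v x)
    (haS : a ∈ S) (hbS : b ∈ S) (hvS : v ∉ S)
    (hr : (G.induce S).Reachable ⟨a, haS⟩ ⟨b, hbS⟩) : False := by
  obtain ⟨p, hp, hd⟩ := hr.exists_path_of_dist
  obtain ⟨d, hd'⟩ : ∃ d, d = p.length := ⟨_, rfl⟩
  have hshort : ∀ i j, i ≤ d → j ≤ d → i < j →
      G.Adj (p.getVert i : α) (p.getVert j : α) → j = i + 1 := by
    intro i j hi hj hij hadj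
    have hadj' : (G.induce S).Adj (p.getVert i) (p.getVert j) := hadj
    have := dist_le ((p.take i).append (Walk.cons hadj' (p.drop j)))
    rw [← hd] at this
    simp only [Walk.length_append, Walk.length_cons, Walk.take_length, Walk.drop_length] at this
    omega
  have hinj : ∀ i j, i ≤ d → j ≤ d → (p.getVert i : α) = p.getVert j → i = j := by
    intro i j hi hj hij
    exact hp.getVert_injOn (by simpa [← hd'] using hi) (by simpa [← hd'] using hj)
      (Subtype.ext hij)
  have hp0 : (p.getVert 0 : α) = a := by simp
  have hpd : (p.getVert d : α) = b := by simp [hd']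
  have hd2 : 2 ≤ d := by
    by_contra hlt
    have : d = 0 ∨ d = 1 := by omega
    rcases this with h | h
    · rw [h] at hpd; exact hab (hp0.symm.trans hpd)
    · have := p.adj_getVert_succ (i := 0) (by omega)
      have h2 : G.Adj (p.getVert 0 : α) (p.getVert (0 + 1) : α) := this
      rw [hp0] at h2
      rw [h] at hpd
      rw [hpd] at h2
      exact hnab h2
  have hne : ∀ i, (p.getVert i : α) ≠ v := fun i e => hvS (e ▸ (p.getVert i).2)
  have hva : ∀ i ≤ d, G.Adj v (p.getVert i : α) → i = 0 ∨ i = d := by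
    intro i hi hadj
    by_contra hcon
    push Not at hcon
    refine (hS _ (p.getVert i).2 ?_ ?_).2 hadj
    · intro e; exact hcon.1 (hinj i 0 hi (by omega) (e.trans hp0.symm))
    · intro e; exact hcon.2 (hinj i d hi (by omega) (e.trans hpd.symm))
  let f : ℕ → α := fun i => if i ≤ d then (p.getVert i : α) else if i = d + 1 then v else a
  have f1 : ∀ i ≤ d, f i = p.getVert i := fun i hi => by simp [f, hi]
  have f2 : f (d + 1) = v := by simp [f]
  have f3 : f (d + 2) = a := by simp [f]
  obtain ⟨w, hw, hl, hv⟩ := sc_cycle G (d + 2) (by omega) f (by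
      intro i hi
      rcases lt_trichotomy i d with h | h | h
      · rw [f1 _ (by omega), f1 _ (by omega)]
        exact p.adj_getVert_succ (i := i) (by omega)
      · subst h
        rw [f1 _ le_rfl, f2, hpd]; exact hb.symm
      · have : i = d + 1 := by omega
        subst this
        rw [f2, f3]; exact ha) (by rw [f3, f1 0 (by omega), hp0]) (by
      intro i hi j hj hij
      by_cases h1 : i ≤ d <;> by_cases h2 : j ≤ d
      · rw [f1 i h1, f1 j h2] at hij
        exact hinj i j h1 h2 hij
      · have : j = d + 1 := by omega
        rw [f1 i h1, this, f2] at hij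
        exact absurd hij (hne i)
      · have : i = d + 1 := by omega
        rw [f1 j h2, this, f2] at hij
        exact absurd hij.symm (hne j)
      · omega)
  refine hG ⟨_, w, ⟨hw, ?_⟩, by omega⟩
  have key : ∀ i j, i ≤ d + 1 → j ≤ d + 1 → i < j → G.Adj (f i) (f j) →
      consecIn w.support (f i) (f j) := by
    intro i j hi hj hij hadj
    unfold consecIn
    rw [sc_infix_support, sc_infix_support]
    by_cases h2 : j ≤ d
    · have h3 := hadj
      rw [f1 i (by omega), f1 j h2] at h3
      have := hshort i j (by omega) h2 hij h3
      subst this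
      exact Or.inl ⟨i, by omega, hv i (by omega), hv _ (by omega)⟩
    · have : j = d + 1 := by omega
      subst this
      have h3 := hadj
      rw [f1 i (by omega), f2] at h3
      rcases hva i (by omega) h3.symm with h | h
      · subst h
        refine Or.inr ⟨d + 1, by omega, hv _ (by omega), ?_⟩
        rw [hv _ (by omega), f3, f1 0 (by omega), hp0]
      · subst h
        exact Or.inl ⟨i, by omega, hv i (by omega), hv _ (by omega)⟩
  have rep : ∀ x ∈ w.support, ∃ i ≤ d + 1, x = f i := by
    intro x hx
    obtain ⟨i, rfl, hi⟩ := Walk.mem_support_iff_exists_getVert.1 hx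
    by_cases h : i = d + 2
    · subst h
      exact ⟨0, by omega, by rw [hv _ (by omega), f3, f1 0 (by omega), hp0]⟩
    · exact ⟨i, by omega, hv i (by omega)⟩
  intro x hx y hy hadj
  obtain ⟨i, hi, rfl⟩ := rep x hx
  obtain ⟨j, hj, rfl⟩ := rep y hy
  rcases lt_trichotomy i j with h | h | h
  · exact key i j hi hj h hadj
  · subst h; exact absurd hadj (G.loopless.irrefl _)
  · exact (key j i hj hi h hadj.symm).symm

/-- A closed sequence with consecutive terms equal or adjacent, with no odd chords,
cannot exist in a strongly chordal graph. -/
theorem sc_core {α : Type*} (G : SimpleGraph α) (hG : StronglyChordal G) (n : ℕ) (hn : 6 ≤ n)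
    (hev : Even n) (z : ℕ → α) (hper : ∀ i, z (i + n) = z i)
    (hR : ∀ i, z i = z (i + 1) ∨ G.Adj (z i) (z (i + 1)))
    (hN : ∀ i j, Odd (j - i) → i + 3 ≤ j → j + 3 ≤ i + n → z i ≠ z j ∧ ¬ G.Adj (z i) (z j))
    (hD : ∀ i j, i < j → j < i + n → Even (j - i) → z i ≠ z j) : False := by
  by_cases hex : ∃ i, z i = z (i + 1)
  · obtain ⟨s, hs⟩ := hex
    have hstep : z (s + n) = z s := hper s
    let S : Set α := {x | ∃ j, s + 2 ≤ j ∧ j ≤ s + n - 1 ∧ x = z j}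
    have hfar : ∀ j, s + 3 ≤ j → j ≤ s + n - 2 → z j ≠ z s ∧ ¬ G.Adj (z s) (z j) := by
      intro j h1 h2
      obtain ⟨m, hm⟩ := hev
      rcases Nat.even_or_odd (j - s) with h | h
      · have h3 := hN (s + 1) j (by
          rw [show j - (s + 1) = j - s - 1 by omega]
          exact Nat.Even.sub_odd (by omega) h odd_one) (by rcases h with ⟨t, ht⟩; omega) (by omega)
        rw [← hs] at h3
        exact ⟨h3.1.symm, h3.2⟩
      · have h3 := hN s j h (by omega) (by rcases h with ⟨t, ht⟩; omega)
        exact ⟨h3.1.symm, h3.2⟩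
    have haS : z (s + 2) ∈ S := ⟨s + 2, by omega, by omega, rfl⟩
    have hbS : z (s + n - 1) ∈ S := ⟨s + n - 1, by omega, by omega, rfl⟩
    have hva' : z s ≠ z (s + 2) := hD s (s + 2) (by omega) (by omega) (by simp)
    have hvb' : z s ≠ z (s + n - 1) := by
      rw [hs]
      refine hD (s + 1) (s + n - 1) (by omega) (by omega) ?_
      obtain ⟨m, hm⟩ := hev
      exact ⟨m - 1, by omega⟩
    have hab := hN (s + 2) (s + n - 1) (by
      obtain ⟨m, hm⟩ := hev
      exact ⟨m - 2, by omega⟩) (by omega) (by omega)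
    refine sc_chordal_sep G hG.1 (z s) (z (s + 2)) (z (s + n - 1)) ?_ ?_ hab.1 hab.2 S ?_ haS hbS
      ?_ ?_
    · rcases hR (s + 1) with h | h
      · exact absurd (hs.trans h) hva'
      · rw [← hs] at h; exact h
    · have h := hR (s + n - 1)
      rw [show s + n - 1 + 1 = s + n by omega, hper] at h
      rcases h with h | h
      · exact absurd h.symm hvb'
      · exact h.symm
    · rintro x ⟨j, h1, h2, rfl⟩ h3 h4
      refine hfar j ?_ ?_
      · by_contra h
        exact h3 (by rw [show j = s + 2 by omega])
      · by_contra h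
        exact h4 (by rw [show j = s + n - 1 by omega])
    · rintro ⟨j, h1, h2, h3⟩
      by_cases h5 : j = s + 2
      · exact hva' (h3.trans (by rw [h5]))
      by_cases h6 : j = s + n - 1
      · exact hvb' (h3.trans (by rw [h6]))
      exact (hfar j (by omega) (by omega)).1 h3.symm
    · have hreach : ∀ t, ∀ ht : s + 2 + t ≤ s + n - 1, (G.induce S).Reachable ⟨z (s + 2), haS⟩
          ⟨z (s + 2 + t), ⟨s + 2 + t, by omega, ht, rfl⟩⟩ := by
        intro t
        induction t with
        | zero => intro ht; exact Reachable.refl _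
        | succ t ih =>
          intro ht
          refine (ih (by omega)).trans ?_
          rcases hR (s + 2 + t) with h | h
          · have e : (⟨z (s + 2 + t), ⟨s + 2 + t, by omega, by omega, rfl⟩⟩ : S) =
              ⟨z (s + 2 + (t + 1)), ⟨s + 2 + (t + 1), by omega, ht, rfl⟩⟩ := Subtype.ext h
            rw [e]
          · exact Adj.reachable h
      have := hreach (n - 3) (by omega)
      convert this using 3
      omega
  · push Not at hex
    have hA : ∀ i, G.Adj (z i) (z (i + 1)) := fun i => (hR i).resolve_left (hex i)
    have hlt : ∀ i j, i < j → j < i + n → z i ≠ z j := by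
      intro i j h1 h2
      obtain ⟨m, hm⟩ := hev
      rcases Nat.even_or_odd (j - i) with h | h
      · exact hD i j h1 h2 h
      · by_cases h3 : j = i + 1
        · rw [h3]; exact hex i
        by_cases h4 : j = i + n - 1
        · have := hex j
          rw [show j + 1 = i + n by omega, hper] at this
          exact this.symm
        have h' := h
        obtain ⟨t, ht⟩ := h'
        exact (hN i j h (by omega) (by omega)).1
    obtain ⟨w, hw, hl, hv⟩ := sc_cycle G n (by omega) z (fun i _ => hA i)
      (by simpa using hper 0) (by
        intro i hi j hj hij
        rcases lt_trichotomy i j with h | h | h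
        · exact absurd hij (hlt i j h (by omega))
        · exact h
        · exact absurd hij.symm (hlt j i h (by omega)))
    obtain ⟨i, j, hi, hj, hij, hadj, hodd, h1⟩ := hG.2 _ w hw (by rwa [hl]) (by omega)
    rw [Walk.length_support] at hi hj
    simp only [List.get_eq_getElem, Walk.support_getElem_eq_getVert] at hadj
    rw [hv _ (by omega), hv _ (by omega)] at hadj
    rw [hl] at hodd h1
    obtain ⟨m, hm⟩ := hev
    obtain ⟨t, ht⟩ := hodd
    refine (hN i j ?_ (by omega) (by omega)).2 hadj
    rw [Nat.odd_iff]
    omega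

/-- equal or adjacent -/
def scM {α : Type*} (G : SimpleGraph α) (a b : α) : Prop := a = b ∨ G.Adj a b

theorem scM_symm {α : Type*} {G : SimpleGraph α} {a b : α} (h : scM G a b) : scM G b a := by
  rcases h with h | h
  · exact Or.inl h.symm
  · exact Or.inr h.symm

theorem scM_comm {α : Type*} {G : SimpleGraph α} {a b : α} : scM G a b ↔ scM G b a :=
  ⟨scM_symm, scM_symm⟩

theorem sc_mem_closedNbhd {α : Type*} {G : SimpleGraph α} {a b : α} :
    b ∈ closedNbhd G a ↔ scM G a b := by
  unfold closedNbhd scM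
  simp [eq_comm]

theorem sc_mod (i d n : ℕ) (hd : d < n) :
    (i + d) % n = if i % n + d < n then i % n + d else i % n + d - n := by
  have h1 : i % n < n := Nat.mod_lt _ (by omega)
  rw [Nat.add_mod, Nat.mod_eq_of_lt hd]
  split_ifs with h
  · exact Nat.mod_eq_of_lt h
  · rw [Nat.mod_eq_sub_mod (by omega)]
    exact Nat.mod_eq_of_lt (by omega)

/-- the row or column index of a cyclic position -/
def scIdx (m u : ℕ) : ℕ := if m ≤ u then u - m + 1 else m - u

theorem scIdx_spec (m u : ℕ) :
    (m ≤ u ∧ scIdx m u + m = u + 1) ∨ (u < m ∧ scIdx m u + u = m) := by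
  unfold scIdx
  split_ifs <;> omega

/-- the cyclic arrangement of rows and columns -/
def scZ {α : Type*} (m : ℕ) (r c : ℕ → α) (u : ℕ) : α :=
  if (u + m) % 2 = 1 then r (scIdx m u) else c (scIdx m u)

theorem sc_matrix {α : Type*} (G : SimpleGraph α) (hG : StronglyChordal G) (m : ℕ) (hm : 3 ≤ m)
    (r c : ℕ → α)
    (hr : ∀ i j, 1 ≤ i → i < j → j ≤ m → r i ≠ r j)
    (hc : ∀ i j, 1 ≤ i → i < j → j ≤ m → c i ≠ c j)
    (hM : ∀ i j, 1 ≤ i → i ≤ m → 1 ≤ j → j ≤ m →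
      (scM G (r i) (c j) ↔ (i + 1 = j ∨ j + 1 = i ∨ (i = 1 ∧ j = 1) ∨ (i = m ∧ j = m)))) :
    False := by
  have hr' : ∀ i j, 1 ≤ i → 1 ≤ j → i ≤ m → j ≤ m → i ≠ j → r i ≠ r j := by
    intro i j h1 h2 h3 h4 h5
    rcases Nat.lt_or_gt_of_ne h5 with h | h
    · exact hr i j h1 h h4
    · exact (hr j i h2 h h3).symm
  have hc' : ∀ i j, 1 ≤ i → 1 ≤ j → i ≤ m → j ≤ m → i ≠ j → c i ≠ c j := by
    intro i j h1 h2 h3 h4 h5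
    rcases Nat.lt_or_gt_of_ne h5 with h | h
    · exact hc i j h1 h h4
    · exact (hc j i h2 h h3).symm
  have A : ∀ u v, u < v → v < 2 * m → (v - u) % 2 = 1 →
      (scM G (scZ m r c u) (scZ m r c v) ↔ (v = u + 1 ∨ (u = 0 ∧ v + 1 = 2 * m))) := by
    intro u v h1 h2 h3
    have eu := scIdx_spec m u
    have ev := scIdx_spec m v
    unfold scZ
    by_cases hp : (u + m) % 2 = 1
    · rw [if_pos hp, if_neg (show ¬ (v + m) % 2 = 1 by omega),
        hM _ _ (by omega) (by omega) (by omega) (by omega)]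
      omega
    · rw [if_neg hp, if_pos (show (v + m) % 2 = 1 by omega), scM_comm,
        hM _ _ (by omega) (by omega) (by omega) (by omega)]
      omega
  have B : ∀ u v, u < v → v < 2 * m → (v - u) % 2 = 0 → scZ m r c u ≠ scZ m r c v := by
    intro u v h1 h2 h3
    have eu := scIdx_spec m u
    have ev := scIdx_spec m v
    unfold scZ
    by_cases hp : (u + m) % 2 = 1
    · rw [if_pos hp, if_pos (show (v + m) % 2 = 1 by omega)]
      apply hr' <;> omega
    · rw [if_neg hp, if_neg (show ¬ (v + m) % 2 = 1 by omega)]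
      apply hc' <;> omega
  have hlt : ∀ i, i % (2 * m) < 2 * m := fun i => Nat.mod_lt _ (by omega)
  refine sc_core G hG (2 * m) (by omega) (even_two_mul m) (fun i => scZ m r c (i % (2 * m)))
    (fun i => by simp) ?_ ?_ ?_
  · intro i
    change scM G _ _
    have h := sc_mod i 1 (2 * m) (by omega)
    have h1 := hlt i
    split_ifs at h with h2
    · rw [A _ _ (by omega) (by omega) (by omega)]; omega
    · rw [scM_comm, A _ _ (by omega) (by omega) (by omega)]; omega
  · intro i j h1 h2 h3
    rw [← not_or]
    change ¬ scM G _ _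
    rw [Nat.odd_iff] at h1
    obtain ⟨d, rfl⟩ : ∃ d, j = i + d := ⟨j - i, by omega⟩
    have h := sc_mod i d (2 * m) (by omega)
    have h1 := hlt i
    split_ifs at h with h2
    · rw [A _ _ (by omega) (by omega) (by omega)]; omega
    · rw [scM_comm, A _ _ (by omega) (by omega) (by omega)]; omega
  · intro i j h1 h2 h3
    rw [Nat.even_iff] at h3
    obtain ⟨d, rfl⟩ : ∃ d, j = i + d := ⟨j - i, by omega⟩
    have h := sc_mod i d (2 * m) (by omega)
    have h1 := hlt i
    split_ifs at h with h2
    · exact B _ _ (by omega) (by omega) (by omega)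
    · exact (B _ _ (by omega) (by omega) (by omega)).symm

/-- lexicographic ordering of the rows -/
def scLex {α : Type*} (M : α → α → Prop) (σ τ : α → ℕ) : Prop :=
  ∀ a b, σ a < σ b → ∀ x, M a x → ¬ M b x →
    ∃ y, τ x < τ y ∧ M b y ∧ ¬ M a y ∧ ∀ w, τ y < τ w → (M a w ↔ M b w)

theorem sc_lex_exists {α : Type*} [Fintype α] (M : α → α → Prop) (hM : ∀ a b, M a b → M b a) :
    ∃ σ τ : α → ℕ, Function.Injective σ ∧ Function.Injective τ ∧
      scLex M σ τ ∧ scLex M τ σ := by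
  classical
  let W : (α ≃ Fin (Fintype.card α)) → α → ℤ := fun τ a => ∑ x, if M a x then 2 ^ (τ x : ℕ) else 0
  let F : (α ≃ Fin (Fintype.card α)) × (α ≃ Fin (Fintype.card α)) → ℤ := fun p => ∑ a, 2 ^ (p.1 a : ℕ) * W p.2 a
  have hFs : ∀ σ τ : (α ≃ Fin (Fintype.card α)), F (σ, τ) = F (τ, σ) := by
    intro σ τ
    simp only [F, W, Finset.mul_sum]
    rw [Finset.sum_comm]
    refine Finset.sum_congr rfl fun a _ => Finset.sum_congr rfl fun x _ => ?_
    have : M x a ↔ M a x := ⟨hM _ _, hM _ _⟩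
    simp only [this]
    split_ifs <;> ring
  have : Nonempty ((α ≃ Fin (Fintype.card α)) × (α ≃ Fin (Fintype.card α))) := ⟨(Fintype.equivFin α, Fintype.equivFin α)⟩
  obtain ⟨⟨σ, τ⟩, hmax⟩ := Finite.exists_max F
  have gen : ∀ σ τ : (α ≃ Fin (Fintype.card α)), (∀ p, F p ≤ F (σ, τ)) →
      scLex M (fun a => (σ a : ℕ)) (fun a => (τ a : ℕ)) := by
    intro σ τ hmax a b hab x hax hbx
    have hne : a ≠ b := by rintro rfl; exact lt_irrefl _ hab
    have hW : W τ a ≤ W τ b := by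
      have h := hmax ((Equiv.swap a b).trans σ, τ)
      have h2 : F ((Equiv.swap a b).trans σ, τ) - F (σ, τ) =
          ((2 : ℤ) ^ (σ b : ℕ) - 2 ^ (σ a : ℕ)) * W τ a +
          ((2 : ℤ) ^ (σ a : ℕ) - 2 ^ (σ b : ℕ)) * W τ b := by
        simp only [F]
        rw [← Finset.sum_sub_distrib, Finset.sum_eq_add a b hne]
        · simp; ring
        · intro y _ hy
          simp [Equiv.swap_apply_of_ne_of_ne hy.1 hy.2]
        · simp
        · simp
      have h3 : (2 : ℤ) ^ (σ a : ℕ) < 2 ^ (σ b : ℕ) := pow_lt_pow_right₀ (by norm_num) hab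
      nlinarith
    have hcol : ∀ x, M a x → ¬ M b x → ∃ y, M b y ∧ ¬ M a y ∧ (τ x : ℕ) ≤ τ y := by
      let e : α ↪ ℕ := ⟨fun a => (τ a : ℕ), fun a b h => τ.injective (Fin.ext h)⟩
      have hs : ∀ c, W τ c = ((∑ k ∈ (Finset.univ.filter (M c)).map e, 2 ^ k : ℕ) : ℤ) := by
        intro c
        simp [W, Finset.sum_map, Finset.sum_filter, e]
        rfl
      rw [hs, hs, Nat.cast_le, Finset.geomSum_le_geomSum_iff_toColex_le_toColex le_rfl,
        Finset.Colex.toColex_le_toColex] at hW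
      intro x h1 h2
      have he : ∀ c y, e y ∈ (Finset.univ.filter (M c)).map e ↔ M c y := by
        intro c y
        rw [Finset.mem_map']; simp
      obtain ⟨k, hk1, hk2, hk3⟩ := hW ((he a x).2 h1) (fun h => h2 ((he b x).1 h))
      obtain ⟨y, -, rfl⟩ := Finset.mem_map.1 hk1
      exact ⟨y, (he b y).1 hk1, fun h => hk2 ((he a y).2 h), hk3⟩
    obtain ⟨y, hy, hymax⟩ := Finset.exists_max_image
      (Finset.univ.filter fun y => ¬ (M a y ↔ M b y)) (fun y => (τ y : ℕ))
      ⟨x, by simp [hax, hbx]⟩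
    simp only [Finset.mem_filter, Finset.mem_univ, true_and] at hy hymax
    have hinj : ∀ y z, (τ y : ℕ) = τ z → y = z := fun y z h => τ.injective (Fin.ext h)
    have hyb : M b y ∧ ¬ M a y := by
      by_contra hcon
      have h1 : M a y ∧ ¬ M b y := by tauto
      obtain ⟨z, hz1, hz2, hz3⟩ := hcol y h1.1 h1.2
      have := hymax z (by tauto)
      have := hinj y z (by omega)
      subst this
      exact hz2 h1.1
    refine ⟨y, ?_, hyb.1, hyb.2, ?_⟩
    · refine lt_of_le_of_ne (hymax x (by tauto)) ?_
      intro h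
      have := hinj x y h
      subst this
      exact hyb.2 hax
    · intro w hw
      by_contra hcon
      exact absurd hw (not_lt.2 (hymax w hcon))
  refine ⟨fun a => (σ a : ℕ), fun a => (τ a : ℕ), fun a b h => σ.injective (Fin.ext h),
    fun a b h => τ.injective (Fin.ext h), gen σ τ hmax, gen τ σ ?_⟩
  intro p
  rw [hFs τ σ]
  exact hmax p

/-- invariant of the growing chordless path -/
structure scInv {α : Type*} (M : α → α → Prop) (σ τ : α → ℕ) (k : ℕ) (r c : ℕ → α) : Prop where
  hr : ∀ i j, 1 ≤ i → i < j → j ≤ k → σ (r i) < σ (r j)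
  hc : ∀ i j, 1 ≤ i → i < j → j ≤ k → τ (c i) < τ (c j)
  hM : ∀ i j, 1 ≤ i → i ≤ k → 1 ≤ j → j ≤ k →
      (M (r i) (c j) ↔ (i + 1 = j ∨ j + 1 = i ∨ (i = 1 ∧ j = 1)))
  hrow : ∀ x, τ (c k) < τ x → ∀ i j, 1 ≤ i → i < k → 1 ≤ j → j < k → (M (r i) x ↔ M (r j) x)
  hcol : ∀ x, σ (r k) < σ x → ∀ i j, 1 ≤ i → i < k → 1 ≤ j → j < k → (M x (c i) ↔ M x (c j))

theorem sc_step {α : Type*} (M : α → α → Prop) (hMs : ∀ a b, M a b → M b a) (σ τ : α → ℕ)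
    (h1 : scLex M σ τ) (h2 : scLex M τ σ)
    (hno : ∀ m, 3 ≤ m → ∀ r c : ℕ → α,
      (∀ i j, 1 ≤ i → i < j → j ≤ m → r i ≠ r j) →
      (∀ i j, 1 ≤ i → i < j → j ≤ m → c i ≠ c j) →
      (∀ i j, 1 ≤ i → i ≤ m → 1 ≤ j → j ≤ m →
      (M (r i) (c j) ↔ (i + 1 = j ∨ j + 1 = i ∨ (i = 1 ∧ j = 1) ∨ (i = m ∧ j = m)))) → False)
    (k : ℕ) (hk : 2 ≤ k) (r c : ℕ → α) (H : scInv M σ τ k r c) :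
    ∃ r' c', scInv M σ τ (k + 1) r' c' := by
  have hkk : ¬ M (r k) (c k) := by rw [H.hM _ _ (by omega) le_rfl (by omega) le_rfl]; omega
  obtain ⟨y, y1, y2, y3, y4⟩ := h1 (r (k - 1)) (r k) (H.hr _ _ (by omega) (by omega) le_rfl) (c k)
    (by rw [H.hM _ _ (by omega) (by omega) (by omega) (by omega)]; omega) hkk
  obtain ⟨x, x1, x2, x3, x4⟩ := h2 (c (k - 1)) (c k) (H.hc _ _ (by omega) (by omega) le_rfl) (r k)
    (by apply hMs; rw [H.hM _ _ (by omega) (by omega) (by omega) (by omega)]; omega)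
    (fun h => hkk (hMs _ _ h))
  let r' : ℕ → α := fun i => if i ≤ k then r i else x
  let c' : ℕ → α := fun i => if i ≤ k then c i else y
  have r1 : ∀ i ≤ k, r' i = r i := fun i hi => by simp [r', hi]
  have c1 : ∀ i ≤ k, c' i = c i := fun i hi => by simp [c', hi]
  have r2 : r' (k + 1) = x := by simp [r']
  have c2 : c' (k + 1) = y := by simp [c']
  have hr : ∀ i j, 1 ≤ i → i < j → j ≤ k + 1 → σ (r' i) < σ (r' j) := by
    intro i j hi hij hj
    rw [r1 i (by omega)]
    by_cases h : j ≤ k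
    · rw [r1 j h]; exact H.hr i j hi hij h
    · rw [show j = k + 1 by omega, r2]
      by_cases h' : i = k
      · rw [h']; exact x1
      · exact (H.hr i k hi (by omega) le_rfl).trans x1
  have hc : ∀ i j, 1 ≤ i → i < j → j ≤ k + 1 → τ (c' i) < τ (c' j) := by
    intro i j hi hij hj
    rw [c1 i (by omega)]
    by_cases h : j ≤ k
    · rw [c1 j h]; exact H.hc i j hi hij h
    · rw [show j = k + 1 by omega, c2]
      by_cases h' : i = k
      · rw [h']; exact y1
      · exact (H.hc i k hi (by omega) le_rfl).trans y1
  have hy : ∀ i, 1 ≤ i → i ≤ k → (M (r i) y ↔ i = k) := by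
    intro i hi hik
    by_cases h : i = k
    · subst h; simp [y2]
    · rw [H.hrow y y1 i (k - 1) hi (by omega) (by omega) (by omega)]
      simp [y3, h]
  have hx : ∀ i, 1 ≤ i → i ≤ k → (M x (c i) ↔ i = k) := by
    intro i hi hik
    by_cases h : i = k
    · subst h; simp [hMs _ _ x2]
    · rw [H.hcol x x1 i (k - 1) hi (by omega) (by omega) (by omega)]
      have : ¬ M x (c (k - 1)) := fun h => x3 (hMs _ _ h)
      simp [this, h]
  have hMM : ∀ i j, 1 ≤ i → i ≤ k + 1 → 1 ≤ j → j ≤ k + 1 → ¬ (i = k + 1 ∧ j = k + 1) →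
      (M (r' i) (c' j) ↔ (i + 1 = j ∨ j + 1 = i ∨ (i = 1 ∧ j = 1))) := by
    intro i j hi hi' hj hj' hne
    by_cases h : i ≤ k
    · rw [r1 i h]
      by_cases h' : j ≤ k
      · rw [c1 j h', H.hM i j hi h hj h']
      · rw [show j = k + 1 by omega, c2, hy i hi h]; omega
    · rw [show i = k + 1 by omega, r2, c1 j (by omega), hx j hj (by omega)]; omega
  have hxy : ¬ M x y := by
    intro hxy
    refine hno (k + 1) (by omega) r' c' ?_ ?_ ?_
    · intro i j a b c e
      have := hr i j a b c
      rw [e] at this; exact lt_irrefl _ this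
    · intro i j a b c e
      have := hc i j a b c
      rw [e] at this; exact lt_irrefl _ this
    · intro i j hi hi' hj hj'
      by_cases h : i = k + 1 ∧ j = k + 1
      · rw [h.1, h.2, r2, c2]; simp [hxy]
      · rw [hMM i j hi hi' hj hj' h]; omega
  refine ⟨r', c', hr, hc, ?_, ?_, ?_⟩
  · intro i j hi hi' hj hj'
    by_cases h : i = k + 1 ∧ j = k + 1
    · rw [h.1, h.2, r2, c2]
      simp only [hxy, false_iff]; omega
    · exact hMM i j hi hi' hj hj' h
  · intro w hw
    rw [c2] at hw
    have key : ∀ i, 1 ≤ i → i < k + 1 → (M (r' i) w ↔ M (r k) w) := by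
      intro i hi hi'
      rw [r1 i (by omega)]
      by_cases h : i = k
      · rw [h]
      · rw [← y4 w hw]
        exact H.hrow w (y1.trans hw) i (k - 1) hi (by omega) (by omega) (by omega)
    intro i j a b c d
    rw [key i a b, key j c d]
  · intro w hw
    rw [r2] at hw
    have key : ∀ i, 1 ≤ i → i < k + 1 → (M w (c' i) ↔ M w (c k)) := by
      intro i hi hi'
      rw [c1 i (by omega)]
      by_cases h : i = k
      · rw [h]
      · rw [H.hcol w (x1.trans hw) i (k - 1) hi (by omega) (by omega) (by omega)]
        have := x4 w hw
        exact ⟨fun h => hMs _ _ (this.1 (hMs _ _ h)), fun h => hMs _ _ (this.2 (hMs _ _ h))⟩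
    intro i j a b c d
    rw [key i a b, key j c d]

theorem sc_forward {α : Type*} [Fintype α] (G : SimpleGraph α) (hG : StronglyChordal G)
    (S : Set α) (hS : S.Nonempty) : ∃ v : S, SimpleVtx (G.induce S) v := by
  classical
  let H := G.induce S
  have hMs : ∀ a b, scM H a b → scM H b a := fun a b h => scM_symm h
  obtain ⟨σ, τ, hσ, hτ, h1, h2⟩ := sc_lex_exists (scM H) hMs
  have hval : ∀ a b : S, scM H a b ↔ scM G (a : α) (b : α) := by
    intro a b
    unfold scM
    rw [Subtype.ext_iff]
    exact Iff.rfl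
  have : Nonempty S := hS.to_subtype
  obtain ⟨v, hv⟩ := Finite.exists_min τ
  have hstep := sc_step (scM H) hMs σ τ h1 h2 (by
    intro m hm r c hr hc hM
    refine sc_matrix G hG m hm (fun i => (r i : α)) (fun i => (c i : α)) ?_ ?_ ?_
    · intro i j a b c e; exact hr i j a b c (Subtype.ext e)
    · intro i j a b c e; exact hc i j a b c (Subtype.ext e)
    · intro i j a b c d
      rw [← hval]; exact hM i j a b c d)
  have gam : ∀ u w : S, scM H v u → scM H v w → σ u < σ w → closedNbhd H u ⊆ closedNbhd H w := by
    intro u w hu hw huw x hx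
    rw [sc_mem_closedNbhd] at hx ⊢
    by_contra hwx
    have hvx : τ v < τ x := by
      refine lt_of_le_of_ne (hv x) fun h => ?_
      have := hτ h
      subst this
      exact hwx (hMs _ _ hw)
    have base : scInv (scM H) σ τ 2 (fun i => if i = 1 then u else w)
        (fun i => if i = 1 then v else x) := by
      refine ⟨?_, ?_, ?_, ?_, ?_⟩
      · intro i j a b c
        obtain rfl : i = 1 := by omega
        obtain rfl : j = 2 := by omega
        simpa using huw
      · intro i j a b c
        obtain rfl : i = 1 := by omega
        obtain rfl : j = 2 := by omega
        simpa using hvx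
      · intro i j a b c d
        have hi : i = 1 ∨ i = 2 := by omega
        have hj : j = 1 ∨ j = 2 := by omega
        rcases hi with rfl | rfl <;> rcases hj with rfl | rfl
        · simpa using hMs _ _ hu
        · simpa using hx
        · simpa using hMs _ _ hw
        · simpa using hwx
      · intro x _ i j a b c d
        obtain rfl : i = 1 := by omega
        obtain rfl : j = 1 := by omega
        rfl
      · intro x _ i j a b c d
        obtain rfl : i = 1 := by omega
        obtain rfl : j = 1 := by omega
        rfl
    have all : ∀ k, ∃ r c, scInv (scM H) σ τ (k + 2) r c := by
      intro k
      induction k with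
      | zero => exact ⟨_, _, base⟩
      | succ k ih =>
        obtain ⟨r, c, h⟩ := ih
        exact hstep (k + 2) (by omega) r c h
    obtain ⟨r, c, h⟩ := all (Fintype.card S)
    have hinj : Set.InjOn r (Finset.Icc 1 (Fintype.card S + 2) : Finset ℕ) := by
      intro i hi j hj hij
      simp only [Finset.coe_Icc, Set.mem_Icc] at hi hj
      rcases lt_trichotomy i j with h' | h' | h'
      · have := h.hr i j hi.1 h' hj.2
        rw [hij] at this; exact absurd this (lt_irrefl _)
      · exact h'
      · have := h.hr j i hj.1 h' hi.2
        rw [hij] at this; exact absurd this (lt_irrefl _)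
    have := Finset.card_image_of_injOn hinj
    have h3 := Finset.card_le_univ (Finset.image r (Finset.Icc 1 (Fintype.card S + 2)))
    rw [this, Nat.card_Icc] at h3
    omega
  refine ⟨v, ?_⟩
  intro u hu w hw
  change u ∈ closedNbhd H v at hu
  change w ∈ closedNbhd H v at hw
  rw [sc_mem_closedNbhd] at hu hw
  rcases lt_trichotomy (σ u) (σ w) with h | h | h
  · exact Or.inl (gam u w hu hw h)
  · rw [hσ h]; exact Or.inl subset_rfl
  · exact Or.inr (gam w u hw hu h)

/-- cyclic indexing of a cycle, and its basic properties -/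
theorem sc_cycle_index {α : Type*} {G : SimpleGraph α} {u : α} (w : G.Walk u u) (hw : w.IsCycle) :
    (∀ i, G.Adj (w.getVert (i % w.length)) (w.getVert ((i + 1) % w.length))) ∧
    (∀ i j, w.getVert (i % w.length) = w.getVert (j % w.length) → i % w.length = j % w.length) ∧
    (∀ i ≤ w.length, w.getVert i = w.getVert (i % w.length)) := by
  have h3 := hw.three_le_length
  have hlast : ∀ i ≤ w.length, w.getVert i = w.getVert (i % w.length) := by
    intro i hi
    by_cases h : i = w.length
    · subst h; simp
    · rw [Nat.mod_eq_of_lt (by omega)]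
  have hlt : ∀ i, i % w.length < w.length := fun i => Nat.mod_lt _ (by omega)
  refine ⟨?_, ?_, hlast⟩
  · intro i
    have := w.adj_getVert_succ (hlt i)
    rw [hlast (i % w.length + 1) (hlt i)] at this
    simpa using this
  · intro i j h
    have := hlt i
    have := hlt j
    exact hw.getVert_injOn' (by simp only [Set.mem_ofPred_eq]; omega)
      (by simp only [Set.mem_ofPred_eq]; omega) h

/-- the simple vertex of the subgraph induced by a cycle -/
theorem sc_cycle_simple {α : Type*} {G : SimpleGraph α} {u : α} (w : G.Walk u u) (hw : w.IsCycle)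
    (h : ∀ S : Set α, S.Nonempty → ∃ v : S, SimpleVtx (G.induce S) v) :
    ∃ i, (∀ j, scM G (w.getVert ((i + 1) % w.length)) (w.getVert (j % w.length)) →
              scM G (w.getVert ((i + 3) % w.length)) (w.getVert (j % w.length))) ∨
         (∀ j, scM G (w.getVert ((i + 3) % w.length)) (w.getVert (j % w.length)) →
              scM G (w.getVert ((i + 1) % w.length)) (w.getVert (j % w.length))) := by
  obtain ⟨hA, hI, hL⟩ := sc_cycle_index w hw
  have h3 := hw.three_le_length
  let S : Set α := {x | x ∈ w.support}
  have hS : ∀ i, w.getVert i ∈ S := fun i => w.getVert_mem_support i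
  obtain ⟨⟨v, hvS⟩, hv⟩ := h S ⟨u, w.start_mem_support⟩
  obtain ⟨t, rfl, ht⟩ := Walk.mem_support_iff_exists_getVert.1 hvS
  let i := t + (w.length - 2)
  have hi : w.getVert t = w.getVert ((i + 2) % w.length) := by
    rw [show i + 2 = t + w.length by simp only [i]; omega, Nat.add_mod_right]
    exact hL t ht
  have hval : ∀ a b : S, b ∈ closedNbhd (G.induce S) a ↔ scM G (a : α) (b : α) := by
    intro a b
    rw [sc_mem_closedNbhd]
    unfold scM
    rw [Subtype.ext_iff]
    exact Iff.rfl
  refine ⟨i, ?_⟩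
  have := hv ⟨w.getVert ((i + 1) % w.length), hS _⟩ (by
      rw [hval]; right
      change G.Adj (w.getVert t) _
      rw [hi]; exact (hA (i + 1)).symm) ⟨w.getVert ((i + 3) % w.length), hS _⟩ (by
      rw [hval]; right
      change G.Adj (w.getVert t) _
      rw [hi]; exact hA (i + 2))
  rcases this with h | h
  · left
    intro j hj
    exact (hval _ ⟨w.getVert (j % w.length), hS _⟩).1 (h ((hval _ _).2 hj))
  · right
    intro j hj
    exact (hval _ ⟨w.getVert (j % w.length), hS _⟩).1 (h ((hval _ _).2 hj))

theorem sc_backward {α : Type*} (G : SimpleGraph α)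
    (h : ∀ S : Set α, S.Nonempty → ∃ v : S, SimpleVtx (G.induce S) v) : StronglyChordal G := by
  constructor
  · rintro ⟨u, w, ⟨hw, hind⟩, h4⟩
    obtain ⟨hA, hI, hL⟩ := sc_cycle_index w hw
    obtain ⟨i, hi⟩ := sc_cycle_simple w hw h
    have hM : scM G (w.getVert ((i + 1) % w.length)) (w.getVert ((i + 3) % w.length)) := by
      rcases hi with hi | hi
      · exact scM_symm (hi (i + 1) (Or.inl rfl))
      · exact hi (i + 3) (Or.inl rfl)
    have e2 := sc_mod (i + 1) 2 w.length (by omega)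
    have e1 := sc_mod (i + 1) 1 w.length (by omega)
    have e3 := sc_mod (i + 3) 1 w.length (by omega)
    have hl := Nat.mod_lt (i + 1) (show w.length > 0 by omega)
    have hl3 := Nat.mod_lt (i + 3) (show w.length > 0 by omega)
    rw [show i + 1 + 2 = i + 3 by omega] at e2
    rcases hM with hM | hM
    · have := hI _ _ hM
      split_ifs at e2 <;> omega
    · rcases hind _ (w.getVert_mem_support _) _ (w.getVert_mem_support _) hM with hc | hc
      · rw [sc_infix_support] at hc
        obtain ⟨j, hj, h1, h2⟩ := hc
        rw [hL j (by omega)] at h1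
        rw [hL _ (by omega)] at h2
        have h1 := hI _ _ h1
        have h2 := hI _ _ h2
        have e4 := sc_mod j 1 w.length (by omega)
        split_ifs at e2 e4 <;> omega
      · rw [sc_infix_support] at hc
        obtain ⟨j, hj, h1, h2⟩ := hc
        rw [hL j (by omega)] at h1
        rw [hL _ (by omega)] at h2
        have h1 := hI _ _ h1
        have h2 := hI _ _ h2
        have e4 := sc_mod j 1 w.length (by omega)
        split_ifs at e2 e4 <;> omega
  · intro u w hw hev h6
    obtain ⟨hA, hI, hL⟩ := sc_cycle_index w hw
    obtain ⟨i, hi⟩ := sc_cycle_simple w hw h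
    have key : ∀ s, scM G (w.getVert (s % w.length)) (w.getVert ((s + 3) % w.length)) →
        HasOddChord G w := by
      intro s hs
      have e := sc_mod s 3 w.length (by omega)
      have hl := Nat.mod_lt s (show w.length > 0 by omega)
      have hl3 := Nat.mod_lt (s + 3) (show w.length > 0 by omega)
      obtain ⟨m, hm⟩ := hev
      rcases hs with hs | hs
      · have := hI _ _ hs
        split_ifs at e <;> omega
      · split_ifs at e with h1
        · refine ⟨s % w.length, (s + 3) % w.length, by rw [Walk.length_support]; omega,
            by rw [Walk.length_support]; omega, by omega, ?_, ?_, ?_⟩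
          · simpa only [List.get_eq_getElem, Walk.support_getElem_eq_getVert] using hs
          · rw [Nat.odd_iff]; omega
          · omega
        · refine ⟨(s + 3) % w.length, s % w.length, by rw [Walk.length_support]; omega,
            by rw [Walk.length_support]; omega, by omega, ?_, ?_, ?_⟩
          · simpa only [List.get_eq_getElem, Walk.support_getElem_eq_getVert] using hs.symm
          · rw [Nat.odd_iff]; omega
          · omega
    rcases hi with hi | hi
    · exact key i (scM_symm (hi i (Or.inr (hA i).symm)))
    · exact key (i + 1) (hi (i + 4) (Or.inr (hA (i + 3))))

end StronglyChordalProof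

theorem strongly_chordal_iff_every_induced_subgraph_has_simple_vertex
    {V : Type*} [Fintype V] (G : SimpleGraph V) :
    StronglyChordal G ↔ ∀ S : Set V, S.Nonempty → ∃ v : S, SimpleVtx (G.induce S) v := by
  exact ⟨fun hG S hS => sc_forward G hG S hS, fun h => sc_backward G h⟩
end

section
/- In a finite connected strongly chordal graph G, every vertex that is not simple lies as an internal vertex on an even-chorded path of G whose two endpoints are simple vertices of G. -/
open SimpleGraph

variable {V : Type*} {W : Type*}

/-- Reflexive adjacency. -/
def RR (G : SimpleGraph V) (a b : V) : Prop := a = b ∨ G.Adj a b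

theorem RR.symm {G : SimpleGraph V} {a b : V} (h : RR G a b) : RR G b a := by
  rcases h with h | h
  · exact Or.inl h.symm
  · exact Or.inr h.symm

theorem RR.comm {G : SimpleGraph V} {a b : V} : RR G a b ↔ RR G b a := ⟨RR.symm, RR.symm⟩

theorem RR.refl {G : SimpleGraph V} (a : V) : RR G a a := Or.inl rfl

theorem mem_closedNbhd_iff {G : SimpleGraph V} {a b : V} : b ∈ closedNbhd G a ↔ RR G b a := by
  unfold closedNbhd RR
  simp only [Set.mem_insert_iff, SimpleGraph.mem_neighborSet]
  constructor
  · rintro (h | h)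
    · exact Or.inl h
    · exact Or.inr h.symm
  · rintro (h | h)
    · exact Or.inl h
    · exact Or.inr h.symm

theorem exists_walk_of_seq {G : SimpleGraph V} (p : ℕ → V) (n : ℕ)
    (h : ∀ i < n, G.Adj (p i) (p (i + 1))) :
    ∃ w : G.Walk (p 0) (p n), w.length = n ∧ w.support = (List.range (n + 1)).map p := by
  induction n with
  | zero => exact ⟨SimpleGraph.Walk.nil, by simp, by simp⟩
  | succ n ih =>
    obtain ⟨w, hw, hs⟩ := ih (fun i hi => h i (by omega))
    refine ⟨w.concat (h n (by omega)), by simp [hw], ?_⟩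
    rw [SimpleGraph.Walk.support_concat, hs, List.range_succ (n := n + 1)]
    simp

theorem exists_cycle_of_seq {G : SimpleGraph V} (p : ℕ → V) (n : ℕ) (hn : 3 ≤ n)
    (h : ∀ i < n, G.Adj (p i) (p (i + 1))) (hc : p n = p 0)
    (hinj : ∀ i j, i < j → j < n → p i ≠ p j) :
    ∃ w : G.Walk (p 0) (p 0), w.IsCycle ∧ w.length = n ∧
      w.support = (List.range (n + 1)).map p := by
  obtain ⟨w, hw, hs⟩ := exists_walk_of_seq p n h
  refine ⟨w.copy rfl hc, ?_, by simpa using hw, by simpa using hs⟩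
  rw [SimpleGraph.Walk.isCycle_iff_isPath_tail_and_le_length]
  refine ⟨?_, by simpa [hw] using hn⟩
  rw [SimpleGraph.Walk.isPath_def, SimpleGraph.Walk.support_tail_of_not_nil, SimpleGraph.Walk.support_copy, hs]
  · rw [List.range_succ_eq_map, List.map_cons, List.tail_cons, List.map_map]
    refine List.Nodup.map_on ?_ List.nodup_range
    intro i hi j hj hij
    simp only [List.mem_range] at hi hj
    simp only [Function.comp] at hij
    have key : ∀ i j, i < j → j < n → p (i + 1) ≠ p (j + 1) := by
      intro i j hij hj he
      by_cases hjn : j + 1 = n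
      · rw [hjn, hc] at he
        exact hinj 0 (i + 1) (by omega) (by omega) he.symm
      · exact hinj (i + 1) (j + 1) (by omega) (by omega) he
    rcases lt_trichotomy i j with hlt | heq | hgt
    · exact absurd hij (key i j hlt hj)
    · exact heq
    · exact absurd hij.symm (key j i hgt hi)
  · rw [SimpleGraph.Walk.not_nil_iff_lt_length]
    simp [hw]; omega

/-- Shortest chains. -/
theorem shortest_chain (E : V → V → Prop) (P Q : V → Prop) {a b : V} (ha : P a) (hb : Q b)
    (h : Relation.ReflTransGen E a b) :
    ∃ (n : ℕ) (q : ℕ → V), P (q 0) ∧ Q (q n) ∧ (∀ i < n, E (q i) (q (i + 1))) ∧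
      (∀ i j, i + 1 < j → j ≤ n → ¬ E (q i) (q j)) ∧ (∀ i j, i < j → j ≤ n → q i ≠ q j) ∧
      (∀ i, 0 < i → i ≤ n → ¬ P (q i)) ∧ (∀ i, i < n → ¬ Q (q i)) := by
  classical
  let S : ℕ → Prop := fun n => ∃ q : ℕ → V, P (q 0) ∧ Q (q n) ∧ (∀ i < n, E (q i) (q (i + 1)))
  have hex : ∃ n, S n := by
    have : ∀ c, Relation.ReflTransGen E a c →
        ∃ n, ∃ q : ℕ → V, P (q 0) ∧ q n = c ∧ (∀ i < n, E (q i) (q (i + 1))) := by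
      intro c hc
      induction hc with
      | refl => exact ⟨0, fun _ => a, ha, rfl, by simp⟩
      | @tail x y _ hxy ih =>
        obtain ⟨n, q, h0, hn, hE⟩ := ih
        refine ⟨n + 1, fun i => if i ≤ n then q i else y, by simpa using h0, by simp, ?_⟩
        intro i hi
        by_cases hin : i = n
        · subst hin; simpa [hn] using hxy
        · have h1 : i ≤ n := by omega
          have h2 : i + 1 ≤ n := by omega
          simp only [h1, h2, if_true]
          exact hE i (by omega)
    obtain ⟨n, q, h0, hn, hE⟩ := this b h
    exact ⟨n, q, h0, hn ▸ hb, hE⟩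
  obtain ⟨q, h0, hn, hE⟩ := Nat.find_spec hex
  have hmin : ∀ m, m < Nat.find hex → ¬ S m := fun m hm => Nat.find_min hex hm
  generalize Nat.find hex = n at *
  -- cutting out positions i+1 .. i+d
  have cut : ∀ i d, 0 < d → i + d ≤ n → (i + d < n → E (q i) (q (i + d + 1))) →
      (i + d = n → Q (q i)) → False := by
    intro i d hd hid hE' hQ'
    refine hmin (n - d) (by omega) ⟨fun k => if k ≤ i then q k else q (k + d), by simpa using h0, ?_, ?_⟩
    · by_cases hc : i + d = n
      · have : n - d ≤ i := by omega
        simp only [this, if_true]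
        have e : n - d = i := by omega
        rw [e]; exact hQ' hc
      · have : ¬ (n - d ≤ i) := by omega
        simp only [this, if_false]
        have e : n - d + d = n := by omega
        rw [e]; exact hn
    · intro k hk
      rcases lt_trichotomy k i with hki | hki | hki
      · have h1 : k ≤ i := by omega
        have h2 : k + 1 ≤ i := by omega
        simp only [h1, h2, if_true]
        exact hE k (by omega)
      · subst hki
        have e : k + 1 + d = k + d + 1 := by omega
        simp only [le_refl, if_true, Nat.not_succ_le_self, if_false, e]
        exact hE' (by omega)
      · have h1 : ¬ k ≤ i := by omega
        have h2 : ¬ k + 1 ≤ i := by omega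
        simp only [h1, h2, if_false]
        have e : k + 1 + d = k + d + 1 := by omega
        rw [e]
        exact hE (k + d) (by omega)
  refine ⟨n, q, h0, hn, hE, ?_, ?_, ?_, ?_⟩
  · intro i j hij hj he
    refine cut i (j - i - 1) (by omega) (by omega) (fun _ => ?_) (fun hh => by omega)
    have e : i + (j - i - 1) + 1 = j := by omega
    rw [e]; exact he
  · intro i j hij hj he
    refine cut i (j - i) (by omega) (by omega) (fun hh => ?_) (fun hh => ?_)
    · have e : i + (j - i) = j := by omega
      rw [e, he]; exact hE j (by omega)
    · have e : j = n := by omega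
      rw [he, e]; exact hn
  · intro i hi hin hP
    refine hmin (n - i) (by omega) ⟨fun k => q (k + i), by simpa using hP, ?_, ?_⟩
    · have e : n - i + i = n := by omega
      simp only [e]; exact hn
    · intro k hk
      have e : k + 1 + i = k + i + 1 := by omega
      simp only [e]
      exact hE (k + i) (by omega)
  · intro i hi hQ
    exact hmin i hi ⟨q, h0, hQ, fun k hk => hE k (by omega)⟩

theorem pair_infix_map_range (p : ℕ → V) (n i : ℕ) (hi : i < n) :
    [p i, p (i + 1)] <:+: (List.range (n + 1)).map p := by
  induction n with
  | zero => omega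
  | succ n ih =>
    by_cases h : i = n
    · subst h
      rw [List.range_succ, List.range_succ]
      simp only [List.map_append, List.map_cons, List.map_nil, List.append_assoc]
      exact ⟨(List.range i).map p, [], by simp⟩
    · have := ih (by omega)
      rw [List.range_succ, List.map_append]
      exact this.trans (List.prefix_append _ _).isInfix

/-- In a chordal graph, nonadjacent neighbours of `v` are separated by `N[v]`. -/
theorem chordal_sep {G : SimpleGraph V} (hG : Chordal G) {v a b : V} (ha : G.Adj v a)
    (hb : G.Adj v b) (hab : ¬ RR G a b)
    (h : Relation.ReflTransGen (fun x y => RR G x y ∧ (¬ RR G v x ∨ x = a ∨ x = b) ∧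
      (¬ RR G v y ∨ y = a ∨ y = b)) a b) : False := by
  obtain ⟨n, q, hq0, hqn, hE, hno, hne, -, -⟩ :=
    shortest_chain _ (fun x => x = a) (fun x => x = b) rfl rfl h
  have hadj : ∀ i < n, G.Adj (q i) (q (i + 1)) := fun i hi => by
    rcases (hE i hi).1 with h1 | h1
    · exact absurd h1 (hne i (i + 1) (by omega) (by omega))
    · exact h1
  have hn2 : 2 ≤ n := by
    by_contra hlt
    have : n = 0 ∨ n = 1 := by omega
    rcases this with rfl | rfl
    · exact hab (Or.inl (hq0.symm.trans hqn))
    · exact hab (hq0 ▸ hqn ▸ (hE 0 (by omega)).1)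
  have hT : ∀ i ≤ n, (¬ RR G v (q i) ∨ q i = a ∨ q i = b) := fun i hi => by
    by_cases h : i < n
    · exact (hE i h).2.1
    · have : i = n := by omega
      right; right; rw [this]; exact hqn
  have hnv : ∀ i ≤ n, q i ≠ v := by
    intro i hi he
    rcases hT i hi with h1 | h1 | h1
    · exact h1 (Or.inl he.symm)
    · exact ha.ne (he.symm.trans h1)
    · exact hb.ne (he.symm.trans h1)
  have hend : ∀ i ≤ n, G.Adj v (q i) → i = 0 ∨ i = n := by
    intro i hi he
    by_contra hc
    push Not at hc
    rcases hT i hi with h1 | h1 | h1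
    · exact h1 (Or.inr he)
    · exact hne 0 i (by omega) hi (hq0.trans h1.symm)
    · exact hne i n (by omega) le_rfl (h1.trans hqn.symm)
  have hnoadj : ∀ i j, i < j → j ≤ n → G.Adj (q i) (q j) → j = i + 1 := by
    intro i j hij hj he
    by_contra hc
    exact hno i j (by omega) hj ⟨Or.inr he, hT i (by omega), hT j hj⟩
  let p : ℕ → V := fun i => if i = 0 then v else if i ≤ n + 1 then q (i - 1) else v
  have hp0 : p 0 = v := by simp [p]
  have hpq : ∀ i ≤ n, p (i + 1) = q i := fun i hi => by simp [p, hi]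
  have hpl : p (n + 2) = v := by simp [p]
  have hpadj : ∀ i < n + 2, G.Adj (p i) (p (i + 1)) := by
    intro i hi
    rcases i with _ | i
    · rw [hp0, hpq 0 (by omega), hq0]; exact ha
    · by_cases hin : i = n
      · subst hin
        rw [hpq i le_rfl, hpl, hqn]; exact hb.symm
      · rw [hpq i (by omega), hpq (i + 1) (by omega)]
        exact hadj i (by omega)
  obtain ⟨w, hw, hl, hs⟩ := exists_cycle_of_seq p (n + 2) (by omega) hpadj (hpl.trans hp0.symm) (by
    intro i j hij hj
    obtain ⟨j, rfl⟩ : ∃ k, j = k + 1 := ⟨j - 1, by omega⟩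
    rw [hpq j (by omega)]
    rcases i with _ | i
    · rw [hp0]; exact (hnv j (by omega)).symm
    · rw [hpq i (by omega)]
      exact hne i j (by omega) (by omega))
  refine hG ⟨_, w, ⟨hw, ?_⟩, by omega⟩
  rw [hs]
  have hcon : ∀ i < n + 2, consecIn ((List.range (n + 2 + 1)).map p) (p i) (p (i + 1)) :=
    fun i hi => Or.inl (pair_infix_map_range p _ i hi)
  have hsymm : ∀ x y, consecIn ((List.range (n + 2 + 1)).map p) x y →
      consecIn ((List.range (n + 2 + 1)).map p) y x := fun x y h => h.symm
  have hrep : ∀ x ∈ (List.range (n + 2 + 1)).map p, x = v ∨ ∃ i ≤ n, x = q i := by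
    intro x hx
    simp only [List.mem_map, List.mem_range] at hx
    obtain ⟨i, hi, rfl⟩ := hx
    rcases i with _ | i
    · exact Or.inl hp0
    · by_cases h : i ≤ n
      · exact Or.inr ⟨i, h, hpq i h⟩
      · have : i = n + 1 := by omega
        subst this
        exact Or.inl hpl
  have hvq : ∀ i ≤ n, G.Adj v (q i) → consecIn ((List.range (n + 2 + 1)).map p) v (q i) := by
    intro i hi hvi
    rcases hend i hi hvi with rfl | rfl
    · have := hcon 0 (by omega)
      rwa [hp0, hpq 0 (by omega)] at this
    · have := hcon (i + 1) (by omega)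
      rw [hpl, hpq i (by omega)] at this
      exact hsymm _ _ this
  have hqq : ∀ i j, i < j → j ≤ n → G.Adj (q i) (q j) →
      consecIn ((List.range (n + 2 + 1)).map p) (q i) (q j) := by
    intro i j hij hj h
    have e := hnoadj i j hij hj h
    subst e
    have := hcon (i + 1) (by omega)
    rwa [hpq i (by omega), hpq (i + 1) (by omega)] at this
  intro x hx y hy hxy
  rcases hrep x hx with rfl | ⟨i, hi, rfl⟩ <;> rcases hrep y hy with rfl | ⟨j, hj, rfl⟩
  · exact absurd hxy (G.irrefl)
  · exact hvq j hj hxy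
  · exact hsymm _ _ (hvq i hi hxy.symm)
  · rcases lt_trichotomy i j with h | h | h
    · exact hqq i j h hj hxy
    · subst h; exact absurd hxy (G.irrefl)
    · exact hsymm _ _ (hqq j i h hi hxy.symm)

theorem chain_of_seq (E : V → V → Prop) (q : ℕ → V) (a k : ℕ)
    (h : ∀ i < k, E (q (a + i)) (q (a + i + 1))) : Relation.ReflTransGen E (q a) (q (a + k)) := by
  induction k with
  | zero => exact Relation.ReflTransGen.refl
  | succ k ih => exact (ih (fun i hi => h i (by omega))).tail (h k (by omega))

theorem tb_cyc {G : SimpleGraph V} (hG : StronglyChordal G) (m : ℕ) (hm : 6 ≤ m) (hev : Even m)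
    (q : ℕ → V) (hper : ∀ i, q (i + m) = q i) (h1 : ∀ i, RR G (q i) (q (i + 1)))
    (h2 : ∀ i d, Odd d → 3 ≤ d → d ≤ m - 3 → ¬ RR G (q i) (q (i + d))) : False := by
  obtain ⟨mm, hmm⟩ := hev
  have hno : ∀ t, q t ≠ q (t + 1) := by
    intro t ht
    have hlast : RR G (q t) (q (t + m - 1)) := by
      have := h1 (t + m - 1)
      rw [show t + m - 1 + 1 = t + m by omega, hper] at this
      exact this.symm
    have hnab : ¬ RR G (q (t + 2)) (q (t + m - 1)) := by
      have := h2 (t + 2) (m - 3) ⟨mm - 2, by omega⟩ (by omega) (by omega)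
      rwa [show t + 2 + (m - 3) = t + m - 1 by omega] at this
    have hsec : RR G (q t) (q (t + 2)) := by
      have := h1 (t + 1)
      rwa [← ht] at this
    have ha : G.Adj (q t) (q (t + 2)) := by
      rcases hsec with h | h
      · rw [← h] at hnab; exact absurd hlast hnab
      · exact h
    have hb : G.Adj (q t) (q (t + m - 1)) := by
      rcases hlast with h | h
      · rw [← h] at hnab; exact absurd hsec.symm hnab
      · exact h
    have hT : ∀ j, 2 ≤ j → j ≤ m - 1 →
        (¬ RR G (q t) (q (t + j)) ∨ q (t + j) = q (t + 2) ∨ q (t + j) = q (t + m - 1)) := by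
      intro j hj hjm
      by_cases e1 : j = 2
      · subst e1; exact Or.inr (Or.inl rfl)
      by_cases e2 : j = m - 1
      · right; right; rw [e2, show t + (m - 1) = t + m - 1 by omega]
      left
      rcases Nat.even_or_odd j with he | ho
      · obtain ⟨k, hk⟩ := he
        have := h2 (t + 1) (j - 1) ⟨k - 1, by omega⟩ (by omega) (by omega)
        rwa [← ht, show t + 1 + (j - 1) = t + j by omega] at this
      · obtain ⟨k, hk⟩ := ho
        exact h2 t j ⟨k, hk⟩ (by omega) (by omega)
    refine chordal_sep hG.1 ha hb hnab ?_
    have := chain_of_seq (fun x y => RR G x y ∧ (¬ RR G (q t) x ∨ x = q (t + 2) ∨ x = q (t + m - 1)) ∧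
      (¬ RR G (q t) y ∨ y = q (t + 2) ∨ y = q (t + m - 1))) q (t + 2) (m - 3) (by
        intro i hi
        refine ⟨h1 _, ?_, ?_⟩
        · rw [show t + 2 + i = t + (2 + i) by omega]; exact hT _ (by omega) (by omega)
        · rw [show t + 2 + i + 1 = t + (3 + i) by omega]; exact hT _ (by omega) (by omega))
    rwa [show t + 2 + (m - 3) = t + m - 1 by omega] at this
  have hadj : ∀ i, G.Adj (q i) (q (i + 1)) := fun i => by
    rcases h1 i with h | h
    · exact absurd h (hno i)
    · exact h
  have hinj : ∀ i d, 0 < d → d < m → q i ≠ q (i + d) := by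
    intro i d hd hdm he
    rcases Nat.even_or_odd d with ⟨k, hk⟩ | ⟨k, hk⟩
    · by_cases hd2 : d = m - 2
      · refine h2 i (m - 3) ⟨mm - 2, by omega⟩ (by omega) (by omega) ?_
        have := h1 (i + (m - 3))
        rw [show i + (m - 3) + 1 = i + d by omega, ← he] at this
        exact this.symm
      · refine h2 i (d + 1) ⟨k, by omega⟩ (by omega) (by omega) ?_
        have := h1 (i + d)
        rwa [← he] at this
    · by_cases hd1 : d = 1
      · subst hd1; exact hno i he
      by_cases hd2 : d = m - 1
      · have := hno (i + d)
        rw [show i + d + 1 = i + m by omega, hper] at this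
        exact this he.symm
      · exact h2 i d ⟨k, hk⟩ (by omega) (by omega) (Or.inl he)
  obtain ⟨w, hw, hl, hs⟩ := exists_cycle_of_seq q m (by omega) (fun i _ => hadj i)
    (by simpa using hper 0) (fun i j hij hj => by
      have := hinj i (j - i) (by omega) (by omega)
      rwa [show i + (j - i) = j by omega] at this)
  obtain ⟨i, j, hi, hj, hij, hA, ho, hgt⟩ := hG.2 _ w hw (by rw [hl]; exact ⟨mm, hmm⟩) (by omega)
  rw [hl] at ho hgt
  have hlen : w.support.length = m + 1 := by simp [hs]
  have ei : w.support.get ⟨i, hi⟩ = q i := by simp [hs]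
  have ej : w.support.get ⟨j, hj⟩ = q j := by simp [hs]
  rw [ei, ej] at hA
  obtain ⟨k, hk⟩ := ho
  have := h2 i (j - i) (by
    rcases Nat.even_or_odd (j - i) with ⟨r, hr⟩ | h
    · exfalso; omega
    · exact h) (by omega) (by omega)
  rw [show i + (j - i) = j by omega] at this
  exact this (Or.inr hA)

theorem tb_hyp {G : SimpleGraph V} (hG : StronglyChordal G) (N : ℕ) (hN : 2 ≤ N) (q T : ℕ → V)
    (h : ∀ i j, i ≤ N → j ≤ N → (RR G (q i) (T j) ↔ (j = i ∨ j = i + 1 ∨ (i = N ∧ j = 0)))) :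
    False := by
  let f : ℕ → V := fun s => if s % 2 = 0 then T (s / 2) else q (s / 2)
  have hf0 : ∀ s, s % 2 = 0 → f s = T (s / 2) := fun s hs => by simp [f, hs]
  have hf1 : ∀ s, s % 2 = 1 → f s = q (s / 2) := fun s hs => by simp [f, hs]
  have hmod : ∀ s d, s < 2 * N + 2 → d < 2 * N + 2 → ((s + d) % (2 * N + 2) = s + d ∧ s + d < 2 * N + 2) ∨
      ((s + d) % (2 * N + 2) = s + d - (2 * N + 2) ∧ 2 * N + 2 ≤ s + d) := by
    intro s d hs hd
    by_cases hc : s + d < 2 * N + 2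
    · exact Or.inl ⟨Nat.mod_eq_of_lt hc, hc⟩
    · refine Or.inr ⟨?_, by omega⟩
      rw [Nat.mod_eq_sub_mod (by omega), Nat.mod_eq_of_lt (by omega)]
  have hRR : ∀ s s', s < 2 * N + 2 → s' < 2 * N + 2 → s % 2 ≠ s' % 2 →
      (RR G (f s) (f s') ↔ (s' = s + 1 ∨ s = s' + 1 ∨ (s = 2 * N + 1 ∧ s' = 0) ∨ (s' = 2 * N + 1 ∧ s = 0))) := by
    intro s s' hs hs' hp
    rcases Nat.mod_two_eq_zero_or_one s with e | e
    · have e' : s' % 2 = 1 := by omega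
      rw [hf0 s e, hf1 s' e', RR.comm, h _ _ (by omega) (by omega)]
      omega
    · have e' : s' % 2 = 0 := by omega
      rw [hf1 s e, hf0 s' e', h _ _ (by omega) (by omega)]
      omega
  refine tb_cyc hG (2 * N + 2) (by omega) ⟨N + 1, by omega⟩ (fun i => f (i % (2 * N + 2))) ?_ ?_ ?_
  · intro i; simp
  · intro i
    show RR G (f (i % (2 * N + 2))) (f ((i + 1) % (2 * N + 2)))
    rw [← Nat.mod_add_mod]
    have hs : i % (2 * N + 2) < 2 * N + 2 := Nat.mod_lt _ (by omega)
    generalize i % (2 * N + 2) = s at *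
    rcases hmod s 1 hs (by omega) with ⟨e, hl⟩ | ⟨e, hl⟩ <;> rw [e, hRR _ _ (by omega) (by omega) (by omega)] <;> omega
  · intro i d ⟨k, hk⟩ h3 hd
    show ¬ RR G (f (i % (2 * N + 2))) (f ((i + d) % (2 * N + 2)))
    rw [← Nat.mod_add_mod]
    have hs : i % (2 * N + 2) < 2 * N + 2 := Nat.mod_lt _ (by omega)
    generalize i % (2 * N + 2) = s at *
    rcases hmod s d hs (by omega) with ⟨e, hl⟩ | ⟨e, hl⟩ <;> rw [e, hRR _ _ (by omega) (by omega) (by omega)] <;> omega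

/-- Common neighbours of `y` and `z` in `X0`. -/
def comNb (G : SimpleGraph V) (X0 : Set V) (y z : V) : Set V := {c | c ∈ X0 ∧ RR G c y ∧ RR G c z}

/-- One step outside of the separator given by `C`. -/
def stepC (G : SimpleGraph V) (X0 Y0 C : Set V) (x x' : V) : Prop :=
  (x ∈ X0 ∧ x ∉ C) ∧ (x' ∈ X0 ∧ x' ∉ C) ∧ ∃ t ∈ Y0, (∃ c ∈ C, ¬ RR G c t) ∧ RR G x t ∧ RR G x' t

theorem stepC.symm {G : SimpleGraph V} {X0 Y0 C : Set V} {x x' : V} (h : stepC G X0 Y0 C x x') :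
    stepC G X0 Y0 C x' x := by
  obtain ⟨h1, h2, t, ht, hc, h3, h4⟩ := h
  exact ⟨h2, h1, t, ht, hc, h4, h3⟩

theorem sep_lemma {G : SimpleGraph V} (hG : StronglyChordal G) (X0 Y0 C : Set V) (y z : V)
    (hC : C = comNb G X0 y z) {p q : V}
    (hp : p ∈ X0) (hpy : RR G p y) (hpC : p ∉ C) (hq : q ∈ X0) (hqz : RR G q z) (hqC : q ∉ C)
    (h : Relation.ReflTransGen (stepC G X0 Y0 C) p q) : False := by
  obtain ⟨n, x, ⟨hx0, hx0y, hx0C⟩, ⟨hxn, hxnz, hxnC⟩, hE, hshort, hne, hPno, hQno⟩ :=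
    shortest_chain _ (fun x => x ∈ X0 ∧ RR G x y ∧ x ∉ C) (fun x => x ∈ X0 ∧ RR G x z ∧ x ∉ C)
      ⟨hp, hpy, hpC⟩ ⟨hq, hqz, hqC⟩ h
  have hn : 1 ≤ n := by
    by_contra hc
    have : n = 0 := by omega
    subst this
    exact hx0C (hC ▸ ⟨hx0, hx0y, hxnz⟩)
  have hxX : ∀ i ≤ n, x i ∈ X0 ∧ x i ∉ C := by
    intro i hi
    by_cases hin : i < n
    · exact (hE i hin).1
    · have : i = n := by omega
      subst this
      exact ⟨hxn, hxnC⟩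
  have hch : ∀ i, ∃ t, i < n → t ∈ Y0 ∧ (∃ c ∈ C, ¬ RR G c t) ∧ RR G (x i) t ∧ RR G (x (i + 1)) t := by
    intro i
    by_cases hin : i < n
    · obtain ⟨-, -, t, ht⟩ := hE i hin
      exact ⟨t, fun _ => ht⟩
    · exact ⟨y, fun h => absurd h hin⟩
  choose t ht using hch
  let T : ℕ → V := fun j => if j = 0 then y else if j ≤ n then t (j - 1) else z
  have hT0 : T 0 = y := by simp [T]
  have hTm : ∀ j < n, T (j + 1) = t j := fun j hj => by
    simp [T, show j + 1 ≤ n by omega]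
  have hTn : T (n + 1) = z := by simp [T]
  have hRT : ∀ i j, i ≤ n → j ≤ n + 1 → (RR G (x i) (T j) ↔ (j = i ∨ j = i + 1)) := by
    intro i j hi hj
    rcases j with _ | j
    · rw [hT0]
      constructor
      · intro hr
        by_contra hc
        exact hPno i (by omega) hi ⟨(hxX i hi).1, hr, (hxX i hi).2⟩
      · intro hr
        have : i = 0 := by omega
        subst this; exact hx0y
    · by_cases hjn : j = n
      · subst hjn
        rw [hTn]
        constructor
        · intro hr
          by_contra hc
          exact hQno i (by omega) ⟨(hxX i hi).1, hr, (hxX i hi).2⟩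
        · intro hr
          have : i = j := by omega
          subst this; exact hxnz
      · have hjlt : j < n := by omega
        rw [hTm j hjlt]
        obtain ⟨htY, htC, ht1, ht2⟩ := ht j hjlt
        constructor
        · intro hr
          by_contra hc
          rcases Nat.lt_or_ge i j with hij | hij
          · exact hshort i (j + 1) (by omega) (by omega)
              ⟨hxX i hi, hxX _ (by omega), t j, htY, htC, hr, ht2⟩
          · exact hshort j i (by omega) (by omega)
              ⟨hxX _ (by omega), hxX i hi, t j, htY, htC, ht1, hr⟩
        · rintro (hr | hr)
          · rw [← hr]; exact ht2
          · have : i = j := by omega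
            rw [this]; exact ht1
  obtain ⟨-, ⟨c, hcC, hct⟩, -, -⟩ := ht 0 (by omega)
  have hcyz : RR G c y ∧ RR G c z := by
    rw [hC] at hcC; exact hcC.2
  classical
  have hex : ∃ j, 1 ≤ j ∧ j ≤ n + 1 ∧ RR G c (T j) := ⟨n + 1, by omega, le_rfl, by rw [hTn]; exact hcyz.2⟩
  obtain ⟨hj1, hjn, hjc⟩ := Nat.find_spec hex
  have hmin : ∀ k, k < Nat.find hex → ¬ (1 ≤ k ∧ k ≤ n + 1 ∧ RR G c (T k)) :=
    fun k hk => Nat.find_min hex hk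
  generalize Nat.find hex = j at *
  have hj2 : 2 ≤ j := by
    by_contra hc
    have : j = 1 := by omega
    subst this
    rw [show (1 : ℕ) = 0 + 1 from rfl, hTm 0 (by omega)] at hjc
    exact hct hjc
  refine tb_hyp hG j hj2 (fun i => if i < j then x i else c) T ?_
  intro i k hi hk
  by_cases hij : i < j
  · simp only [hij, if_true]
    rw [hRT i k (by omega) (by omega)]
    omega
  · have : i = j := by omega
    subst this
    simp only [hij, if_false]
    constructor
    · intro hr
      by_contra hc
      have hk0 : k ≠ 0 := fun h0 => hc (Or.inr (Or.inr ⟨trivial, h0⟩))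
      have hki : k ≠ i := fun h0 => hc (Or.inl h0)
      exact hmin k (by omega) ⟨by omega, by omega, hr⟩
    · rintro (hr | hr | hr)
      · subst hr; exact hjc
      · omega
      · rw [hr.2, hT0]; exact hcyz.1

/-- Inclusion of neighbourhoods within `X0`. -/
def nbLe (G : SimpleGraph V) (X0 : Set V) (s t : V) : Prop := ∀ x ∈ X0, RR G x s → RR G x t

/-- Nest vertices relative to `X0`, `Y0`. -/
def NestV (G : SimpleGraph V) (X0 Y0 : Set V) (a : V) : Prop :=
  ∀ s ∈ Y0, ∀ t ∈ Y0, RR G a s → RR G a t → nbLe G X0 s t ∨ nbLe G X0 t s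

/-- The maximality condition on `C`. -/
def MaxC (G : SimpleGraph V) (X0 Y0 C : Set V) : Prop :=
  ∀ s ∈ Y0, ∀ t ∈ Y0, (∀ c ∈ C, RR G c s) → (∀ c ∈ C, RR G c t) →
    ¬ nbLe G X0 s t → ¬ nbLe G X0 t s → ∀ x ∈ X0, RR G x s → RR G x t → x ∈ C

/-- The induction statement. -/
def NestStmt (G : SimpleGraph V) (X0 : Set V) : Prop :=
  ∀ (Y0 : Set V) (t : V), t ∈ Y0 → (∃ x ∈ X0, ¬ RR G x t) →
    ∃ a ∈ X0, ¬ RR G a t ∧ NestV G X0 Y0 a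

/-- The part of `X0` on the side of `y`. -/
def sideOf (G : SimpleGraph V) (X0 Y0 C : Set V) (y : V) : Set V :=
  {a | ∃ p ∈ X0, RR G p y ∧ p ∉ C ∧ Relation.ReflTransGen (stepC G X0 Y0 C) p a}

theorem sideOf_sub {G : SimpleGraph V} {X0 Y0 C : Set V} {y a : V} (h : a ∈ sideOf G X0 Y0 C y) :
    a ∈ X0 ∧ a ∉ C := by
  obtain ⟨p, hp, hpy, hpC, hr⟩ := h
  cases hr with
  | refl => exact ⟨hp, hpC⟩
  | tail _ h => exact h.2.1

theorem sideOf_step {G : SimpleGraph V} {X0 Y0 C : Set V} {y a b : V} (h : a ∈ sideOf G X0 Y0 C y)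
    (hab : stepC G X0 Y0 C a b) : b ∈ sideOf G X0 Y0 C y := by
  obtain ⟨p, hp, hpy, hpC, hr⟩ := h
  exact ⟨p, hp, hpy, hpC, hr.tail hab⟩

theorem rev_chain {E : V → V → Prop} (hE : ∀ x y, E x y → E y x) {a b : V}
    (h : Relation.ReflTransGen E a b) : Relation.ReflTransGen E b a := by
  induction h with
  | refl => exact Relation.ReflTransGen.refl
  | tail _ h ih => exact Relation.ReflTransGen.head (hE _ _ h) ih

theorem sideOf_disj {G : SimpleGraph V} (hG : StronglyChordal G) {X0 Y0 C : Set V} {y z : V}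
    (hC : C = comNb G X0 y z) {a : V} (h1 : a ∈ sideOf G X0 Y0 C y) (h2 : a ∈ sideOf G X0 Y0 C z) :
    False := by
  obtain ⟨p, hp, hpy, hpC, hr⟩ := h1
  obtain ⟨q, hq, hqz, hqC, hr'⟩ := h2
  exact sep_lemma hG X0 Y0 C y z hC hp hpy hpC hq hqz hqC
    (hr.trans (rev_chain (fun _ _ h => h.symm) hr'))

theorem sideOf_base {G : SimpleGraph V} {X0 Y0 C : Set V} {y p : V} (hp : p ∈ X0) (hpy : RR G p y)
    (hpC : p ∉ C) : p ∈ sideOf G X0 Y0 C y := ⟨p, hp, hpy, hpC, Relation.ReflTransGen.refl⟩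

theorem lemmaK {G : SimpleGraph V} [Finite V] (hG : StronglyChordal G) (X0 Y0 C : Set V) (y z : V)
    (hC : C = comNb G X0 y z) (hz : z ∈ Y0)
    (hyz : ¬ nbLe G X0 y z) (hzy : ¬ nbLe G X0 z y) (hmax : MaxC G X0 Y0 C)
    (ih : ∀ X1 : Set V, X1.ncard < X0.ncard → NestStmt G X1) :
    ∃ a ∈ sideOf G X0 Y0 C y, NestV G X0 Y0 a := by
  unfold nbLe at hyz hzy
  push Not at hyz hzy
  obtain ⟨p, hp, hpy, hpz⟩ := hyz
  obtain ⟨q, hq, hqz, hqy⟩ := hzy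
  have hCX : ∀ c ∈ C, c ∈ X0 ∧ RR G c y ∧ RR G c z := fun c hc => by rw [hC] at hc; exact hc
  have hpC : p ∉ C := fun h => hpz (hCX p h).2.2
  have hqC : q ∉ C := fun h => hqy (hCX q h).2.1
  have hpA : p ∈ sideOf G X0 Y0 C y := sideOf_base hp hpy hpC
  have hqD : q ∈ sideOf G X0 Y0 C z := sideOf_base hq hqz hqC
  have hX1 : (C ∪ sideOf G X0 Y0 C y).ncard < X0.ncard := by
    refine Set.ncard_lt_ncard ⟨?_, ?_⟩ (Set.toFinite _)
    · rintro x (hx | hx)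
      · exact (hCX x hx).1
      · exact (sideOf_sub hx).1
    · intro hsub
      rcases hsub hq with h | h
      · exact hqC h
      · exact sideOf_disj hG hC h hqD
  obtain ⟨a, ha, haz, hN⟩ := ih _ hX1 Y0 z hz ⟨p, Or.inr hpA, hpz⟩
  have haA : a ∈ sideOf G X0 Y0 C y := by
    rcases ha with h | h
    · exact absurd (hCX a h).2.2 haz
    · exact h
  refine ⟨a, haA, ?_⟩
  have hin : ∀ s ∈ Y0, RR G a s → ¬ (∀ c ∈ C, RR G c s) → ∀ x ∈ X0, RR G x s → x ∈ C ∪ sideOf G X0 Y0 C y := by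
    intro s hs has hcs x hx hxs
    by_cases hxC : x ∈ C
    · exact Or.inl hxC
    · right
      push Not at hcs
      exact sideOf_step haA ⟨sideOf_sub haA, ⟨hx, hxC⟩, s, hs, hcs, has, hxs⟩
  intro s hs t ht has hat
  have lift : ∀ s ∈ Y0, ∀ t ∈ Y0, RR G a s → RR G a t → ¬ (∀ c ∈ C, RR G c s) →
      nbLe G (C ∪ sideOf G X0 Y0 C y) s t → nbLe G X0 s t :=
    fun s hs t ht has hat hcs hle x hx hxs => hle x (hin s hs has hcs x hx hxs) hxs
  by_cases hcs : ∀ c ∈ C, RR G c s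
  · by_cases hct : ∀ c ∈ C, RR G c t
    · by_contra hc
      push Not at hc
      exact (sideOf_sub haA).2 (hmax s hs t ht hcs hct hc.1 hc.2 a (sideOf_sub haA).1 has hat)
    · rcases hN s hs t ht has hat with h | h
      · exact absurd (fun c hc => h c (Or.inl hc) (hcs c hc)) hct
      · exact Or.inr (lift t ht s hs hat has hct h)
  · rcases hN s hs t ht has hat with h | h
    · exact Or.inl (lift s hs t ht has hat hcs h)
    · by_cases hct : ∀ c ∈ C, RR G c t
      · exact absurd (fun c hc => h c (Or.inl hc) (hct c hc)) hcs
      · exact Or.inr (lift t ht s hs hat has hct h)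

theorem comNb_comm {G : SimpleGraph V} (X0 : Set V) (y z : V) : comNb G X0 y z = comNb G X0 z y := by
  ext c; simp only [comNb, Set.mem_ofPred_eq]; tauto

/-- A pair of incomparable neighbourhoods with maximal intersection. -/
theorem exists_max_pair {G : SimpleGraph V} [Finite V] (X0 Y0 D : Set V) {y z : V} (hy : y ∈ Y0)
    (hz : z ∈ Y0) (h1 : ¬ nbLe G X0 y z) (h2 : ¬ nbLe G X0 z y) (hD : D ⊆ comNb G X0 y z) :
    ∃ y' ∈ Y0, ∃ z' ∈ Y0, ¬ nbLe G X0 y' z' ∧ ¬ nbLe G X0 z' y' ∧ D ⊆ comNb G X0 y' z' ∧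
      MaxC G X0 Y0 (comNb G X0 y' z') := by
  let S : Set (V × V) := {w | w.1 ∈ Y0 ∧ w.2 ∈ Y0 ∧ ¬ nbLe G X0 w.1 w.2 ∧ ¬ nbLe G X0 w.2 w.1 ∧
    D ⊆ comNb G X0 w.1 w.2}
  obtain ⟨⟨y', z'⟩, ⟨hy', hz', h1', h2', hD'⟩, hm⟩ :=
    Set.exists_max_image S (fun w => (comNb G X0 w.1 w.2).ncard) (Set.toFinite _)
      ⟨(y, z), hy, hz, h1, h2, hD⟩
  refine ⟨y', hy', z', hz', h1', h2', hD', ?_⟩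
  intro s hs t ht hcs hct hst hts x hx hxs hxt
  have hsub : comNb G X0 y' z' ⊆ comNb G X0 s t := fun c hc => ⟨hc.1, hcs c hc, hct c hc⟩
  have := hm (s, t) ⟨hs, ht, hst, hts, hD'.trans hsub⟩
  have e := Set.eq_of_subset_of_ncard_le hsub this (Set.toFinite _)
  rw [e]
  exact ⟨hx, hxs, hxt⟩

theorem nest_exists {G : SimpleGraph V} [Finite V] (hG : StronglyChordal G) (X0 : Set V) :
    NestStmt G X0 := by
  induction hk : X0.ncard using Nat.strong_induction_on generalizing X0 with
  | _ k IH =>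
  have ih : ∀ X1 : Set V, X1.ncard < X0.ncard → NestStmt G X1 :=
    fun X1 h => IH _ (hk ▸ h) X1 rfl
  intro Y0' t ht hx
  -- remove hyperedges inside `t`
  let Y0 : Set V := {s | s ∈ Y0' ∧ (s = t ∨ ¬ nbLe G X0 s t)}
  have htY : t ∈ Y0 := ⟨ht, Or.inl rfl⟩
  have hYt : ∀ s ∈ Y0, nbLe G X0 s t → s = t := fun s hs h => by
    rcases hs.2 with h' | h'
    · exact h'
    · exact absurd h h'
  suffices hsuff : ∃ a ∈ X0, ¬ RR G a t ∧ NestV G X0 Y0 a by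
    obtain ⟨a, ha, hat, hN⟩ := hsuff
    refine ⟨a, ha, hat, ?_⟩
    intro s hs s' hs' has has'
    exact hN s ⟨hs, Or.inr fun h => hat (h a ha has)⟩ s' ⟨hs', Or.inr fun h => hat (h a ha has')⟩ has has'
  by_cases hchain : ∀ s ∈ Y0, ∀ s' ∈ Y0, nbLe G X0 s s' ∨ nbLe G X0 s' s
  · obtain ⟨x, hx, hxt⟩ := hx
    exact ⟨x, hx, hxt, fun s hs s' hs' _ _ => hchain s hs s' hs'⟩
  push Not at hchain
  obtain ⟨y0, hy0, z0, hz0, h1, h2⟩ := hchain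
  obtain ⟨y, hy, z, hz, hyz, hzy, -, hmax⟩ :=
    exists_max_pair X0 Y0 ∅ hy0 hz0 h1 h2 (Set.empty_subset _)
  have hmax' : MaxC G X0 Y0 (comNb G X0 z y) := by rw [comNb_comm]; exact hmax
  by_cases hCt : ∀ c ∈ comNb G X0 y z, RR G c t
  · -- `t` contains `C`
    have key : ∀ y ∈ Y0, ∀ z ∈ Y0, MaxC G X0 Y0 (comNb G X0 y z) →
        (∀ c ∈ comNb G X0 y z, RR G c t) → ¬ nbLe G X0 y t → ¬ nbLe G X0 t y →
        ∃ a ∈ X0, ¬ RR G a t ∧ NestV G X0 Y0 a := by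
      intro y hy z hz hmax hCt h1 h2
      have e : comNb G X0 y z = comNb G X0 y t := by
        ext c
        constructor
        · intro hc; exact ⟨hc.1, hc.2.1, hCt c hc⟩
        · intro hc
          exact hmax y hy t htY (fun c hc => hc.2.1) hCt h1 h2 c hc.1 hc.2.1 hc.2.2
      rw [e] at hmax
      obtain ⟨a, ha, hN⟩ := lemmaK hG X0 Y0 _ y t rfl htY h1 h2 hmax ih
      refine ⟨a, (sideOf_sub ha).1, fun hat => ?_, hN⟩
      exact sideOf_disj hG rfl ha (sideOf_base (sideOf_sub ha).1 hat (sideOf_sub ha).2)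
    by_cases hty : nbLe G X0 t y
    · by_cases htz : nbLe G X0 t z
      · obtain ⟨a, ha, hN⟩ := lemmaK hG X0 Y0 _ y z rfl hz hyz hzy hmax ih
        have := sideOf_sub ha
        exact ⟨a, this.1, fun hat => this.2 ⟨this.1, hty a this.1 hat, htz a this.1 hat⟩, hN⟩
      · refine key z hz y hy hmax' (by rw [comNb_comm]; exact hCt) ?_ htz
        intro h
        have := hYt z hz h
        subst this
        exact hzy hty
    · refine key y hy z hz hmax hCt ?_ hty
      intro h
      have := hYt y hy h
      subst this
      -- now `t = y`
      exact hty (fun x _ h => h)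
  · obtain ⟨a, ha, hN⟩ := lemmaK hG X0 Y0 _ y z rfl hz hyz hzy hmax ih
    obtain ⟨d, hd, hN'⟩ := lemmaK hG X0 Y0 (comNb G X0 y z) z y (comNb_comm _ _ _) hy hzy hyz hmax ih
    by_cases hat : RR G a t
    · refine ⟨d, (sideOf_sub hd).1, fun hdt => ?_, hN'⟩
      push Not at hCt
      exact sideOf_disj hG rfl (sideOf_step ha
        ⟨sideOf_sub ha, sideOf_sub hd, t, htY, hCt, hat, hdt⟩) hd
    · exact ⟨a, (sideOf_sub ha).1, hat, hN⟩

/-- Induced path in the bipartite (closed neighbourhood) incidence graph. -/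
def BInd (G : SimpleGraph V) (p : ℕ → V) (n : ℕ) : Prop :=
  ∀ i j, i < j → j ≤ n → (j - i) % 2 = 1 → (RR G (p i) (p j) ↔ j = i + 1)

/-- Weak even-chorded sequences, in which consecutive vertices may coincide. -/
def WSeq (G : SimpleGraph V) (p : ℕ → V) (n : ℕ) : Prop :=
  (∀ i < n, RR G (p i) (p (i + 1))) ∧
  ∀ i j, i + 1 < j → j ≤ n → RR G (p i) (p j) →
    ((j - i) % 2 = 0 ∧ 0 < i ∧ j < n ∧ ∀ t, i ≤ t → t < j → p t ≠ p (t + 1)) ∨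
    (j = i + 2 ∧ (p i = p (i + 1) ∨ p (i + 1) = p (i + 2)))

theorem wseq_final {G : SimpleGraph V} (n : ℕ) (p : ℕ → V) (hW : WSeq G p n) (a b v : V)
    (ha : p 0 = a) (hb : p n = b) (s : ℕ) (hs : s ≤ n) (hv : p s = v) :
    ∃ w : G.Walk a b, IsEvenChorded G w ∧ v ∈ w.support := by
  induction n generalizing p s with
  | zero =>
    have e : a = b := ha.symm.trans hb
    subst e
    have : s = 0 := by omega
    subst this
    have e : v = a := hv.symm.trans ha
    subst e
    refine ⟨SimpleGraph.Walk.nil, ⟨SimpleGraph.Walk.IsPath.nil, ?_⟩, by simp⟩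
    intro i j hi hj hij
    simp at hj
    omega
  | succ n ih =>
    obtain ⟨hW1, hW2⟩ := hW
    by_cases hco : ∃ t ≤ n, p t = p (t + 1)
    · obtain ⟨t, ht, hpt⟩ := hco
      let f : ℕ → ℕ := fun i => if i < t then i else i + 1
      have hf : ∀ i, (i < t ∧ f i = i) ∨ (t ≤ i ∧ f i = i + 1) := by
        intro i
        by_cases h : i < t
        · exact Or.inl ⟨h, by simp [f, h]⟩
        · exact Or.inr ⟨by omega, by simp [f, h]⟩
      refine ih (fun i => p (f i)) ⟨?_, ?_⟩ ?_ ?_ (if s ≤ t then s else s - 1) ?_ ?_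
      · intro i hi
        show RR G (p (f i)) (p (f (i + 1)))
        rcases hf i with ⟨h1, e1⟩ | ⟨h1, e1⟩ <;> rcases hf (i + 1) with ⟨h2, e2⟩ | ⟨h2, e2⟩ <;> rw [e1, e2]
        · exact hW1 i (by omega)
        · have : i + 1 = t := by omega
          rw [this, ← hpt, ← this]
          exact hW1 i (by omega)
        · omega
        · exact hW1 (i + 1) (by omega)
      · intro i j hij hj
        show RR G (p (f i)) (p (f j)) → ((j - i) % 2 = 0 ∧ 0 < i ∧ j < n ∧ ∀ t, i ≤ t → t < j → p (f t) ≠ p (f (t + 1))) ∨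
          (j = i + 2 ∧ (p (f i) = p (f (i + 1)) ∨ p (f (i + 1)) = p (f (i + 2))))
        intro hR
        rcases hf i with ⟨h1, e1⟩ | ⟨h1, e1⟩ <;> rcases hf j with ⟨h2, e2⟩ | ⟨h2, e2⟩ <;> rw [e1, e2] at hR
        · rcases hW2 i j hij (by omega) hR with ⟨g1, g2, g3, g4⟩ | ⟨g1, g2⟩
          · refine Or.inl ⟨g1, g2, by omega, ?_⟩
            intro r hr1 hr2
            have er : f r = r := by rcases hf r with h | h <;> omega
            have er' : f (r + 1) = r + 1 := by rcases hf (r + 1) with h | h <;> omega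
            rw [er, er']
            exact g4 r hr1 hr2
          · refine Or.inr ⟨g1, ?_⟩
            have er' : f (i + 1) = i + 1 := by rcases hf (i + 1) with h | h <;> omega
            have er'' : f (i + 2) = i + 2 := by rcases hf (i + 2) with h | h <;> omega
            rw [e1, er', er'']
            exact g2
        · exfalso
          rcases hW2 i (j + 1) (by omega) (by omega) hR with ⟨g1, g2, g3, g4⟩ | ⟨g1, g2⟩
          · exact g4 t (by omega) (by omega) hpt
          · omega
        · omega
        · rcases hW2 (i + 1) (j + 1) (by omega) (by omega) hR with ⟨g1, g2, g3, g4⟩ | ⟨g1, g2⟩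
          · refine Or.inl ⟨by omega, ?_, by omega, ?_⟩
            · by_contra hi0
              have hi0' : i = 0 := by omega
              have ht0 : t = 0 := by omega
              subst hi0'; subst ht0
              rw [← hpt] at hR
              rcases hW2 0 (j + 1) (by omega) (by omega) hR with ⟨g1, g2, g3, g4⟩ | ⟨g1, g2⟩
              · omega
              · omega
            · intro r hr1 hr2
              have er : f r = r + 1 := by rcases hf r with h | h <;> omega
              have er' : f (r + 1) = r + 1 + 1 := by rcases hf (r + 1) with h | h <;> omega
              rw [er, er']
              exact g4 (r + 1) (by omega) (by omega)
          · refine Or.inr ⟨by omega, ?_⟩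
            have er' : f (i + 1) = i + 1 + 1 := by rcases hf (i + 1) with h | h <;> omega
            have er'' : f (i + 2) = i + 1 + 2 := by rcases hf (i + 2) with h | h <;> omega
            rw [e1, er', er'']
            exact g2
      · show p (f 0) = a
        rcases hf 0 with ⟨h1, e1⟩ | ⟨h1, e1⟩
        · rw [e1]; exact ha
        · have : t = 0 := by omega
          subst this
          rw [e1, ← hpt]; exact ha
      · show p (f n) = b
        rcases hf n with ⟨h1, e1⟩ | ⟨h1, e1⟩
        · omega
        · rw [e1]; exact hb
      · split_ifs <;> omega
      · show p (f (if s ≤ t then s else s - 1)) = v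
        split_ifs with hst
        · rcases hf s with ⟨h1, e1⟩ | ⟨h1, e1⟩
          · rw [e1]; exact hv
          · have : s = t := by omega
            subst this
            rw [e1, ← hpt]; exact hv
        · rcases hf (s - 1) with ⟨h1, e1⟩ | ⟨h1, e1⟩
          · omega
          · rw [e1, show s - 1 + 1 = s by omega]; exact hv
    · push Not at hco
      have hadj : ∀ i < n + 1, G.Adj (p i) (p (i + 1)) := fun i hi => by
        rcases hW1 i hi with h | h
        · exact absurd h (hco i (by omega))
        · exact h
      have hch : ∀ i j, i + 1 < j → j ≤ n + 1 → RR G (p i) (p j) →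
          (j - i) % 2 = 0 ∧ 0 < i ∧ j < n + 1 := by
        intro i j hij hj hR
        rcases hW2 i j hij hj hR with ⟨g1, g2, g3, g4⟩ | ⟨g1, g2 | g2⟩
        · exact ⟨g1, g2, g3⟩
        · exact absurd g2 (hco i (by omega))
        · exact absurd g2 (hco (i + 1) (by omega))
      have hinj : ∀ i j, i < j → j ≤ n + 1 → p i ≠ p j := by
        intro i j hij hj he
        by_cases h1 : j = i + 1
        · subst h1; exact hco i (by omega) he
        obtain ⟨g1, g2, g3⟩ := hch i j (by omega) hj (Or.inl he)
        obtain ⟨i, rfl⟩ : ∃ k, i = k + 1 := ⟨i - 1, by omega⟩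
        have := hW1 i (by omega)
        rw [he] at this
        have := hch i j (by omega) hj this
        omega
      subst ha hb
      obtain ⟨w, hl, hsup⟩ := exists_walk_of_seq p (n + 1) hadj
      refine ⟨w, ⟨?_, ?_⟩, ?_⟩
      · rw [SimpleGraph.Walk.isPath_def, hsup]
        refine List.Nodup.map_on ?_ List.nodup_range
        intro i hi j hj hij
        simp only [List.mem_range] at hi hj
        rcases lt_trichotomy i j with hlt | heq | hgt
        · exact absurd hij (hinj i j hlt (by omega))
        · exact heq
        · exact absurd hij.symm (hinj j i hgt (by omega))
      · intro i j hi hj hij hA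
        have hlen : w.support.length = n + 1 + 1 := by simp [hsup]
        have ei : w.support.get ⟨i, hi⟩ = p i := by simp [hsup]
        have ej : w.support.get ⟨j, hj⟩ = p j := by simp [hsup]
        rw [ei, ej] at hA
        obtain ⟨g1, g2, g3⟩ := hch i j hij (by omega) (Or.inr hA)
        exact ⟨Nat.even_iff.mpr g1, g2, by omega⟩
      · rw [hsup]
        exact List.mem_map.mpr ⟨s, List.mem_range.mpr (by omega), hv⟩

theorem SimpleVtx.rr {G : SimpleGraph V} {a x y : V} (h : SimpleVtx G a) (hx : RR G x a)
    (hy : RR G y a) : RR G x y := by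
  rcases h x (mem_closedNbhd_iff.mpr hx) y (mem_closedNbhd_iff.mpr hy) with h | h
  · exact mem_closedNbhd_iff.mp (h (mem_closedNbhd_iff.mpr (RR.refl x)))
  · exact (mem_closedNbhd_iff.mp (h (mem_closedNbhd_iff.mpr (RR.refl y)))).symm

theorem bind_coincide {G : SimpleGraph V} (hG : Chordal G) (p : ℕ → V) (n : ℕ) (hB : BInd G p n)
    (i j t : ℕ) (hij : i + 1 < j) (hj : j ≤ n) (hR : RR G (p i) (p j)) (hit : i ≤ t) (htj : t < j)
    (ht : p t = p (t + 1)) : j = i + 2 ∧ (p i = p (i + 1) ∨ p (i + 1) = p (i + 2)) := by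
  have hcons : ∀ s < n, RR G (p s) (p (s + 1)) := fun s hs =>
    (hB s (s + 1) (by omega) (by omega) (by omega)).mpr rfl
  have hfar : ∀ s ≤ n, (s + 1 < t ∨ t + 2 < s) → ¬ RR G (p t) (p s) := by
    intro s hs hor hr
    rcases hor with h | h
    · by_cases hpar : (t - s) % 2 = 1
      · have := (hB s t (by omega) (by omega) hpar).mp hr.symm
        omega
      · rw [ht] at hr
        have := (hB s (t + 1) (by omega) (by omega) (by omega)).mp hr.symm
        omega
    · by_cases hpar : (s - t) % 2 = 1
      · have := (hB t s (by omega) (by omega) hpar).mp hr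
        omega
      · rw [ht] at hr
        have := (hB (t + 1) s (by omega) (by omega) (by omega)).mp hr
        omega
  by_cases h1 : i = t
  · subst h1
    by_cases h2 : j = i + 2
    · exact ⟨h2, Or.inl ht⟩
    · exact absurd hR (hfar j hj (by omega))
  by_cases h2 : j = t + 1
  · by_cases h3 : i + 1 = t
    · refine ⟨by omega, Or.inr ?_⟩
      rw [h3, show i + 2 = t + 1 by omega]; exact ht
    · exfalso
      rw [h2, ← ht] at hR
      exact hfar i (by omega) (by omega) hR.symm
  exfalso
  obtain ⟨r, rfl⟩ : ∃ r, t = r + 1 := ⟨t - 1, by omega⟩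
  have hnab : ¬ RR G (p r) (p (r + 3)) := by
    intro h
    have := (hB r (r + 3) (by omega) (by omega) (by omega)).mp h
    omega
  have hra : RR G (p (r + 1)) (p r) := (hcons r (by omega)).symm
  have hrb : RR G (p (r + 1)) (p (r + 3)) := by rw [ht]; exact hcons (r + 2) (by omega)
  have ha : G.Adj (p (r + 1)) (p r) := by
    rcases hra with h | h
    · rw [h] at hrb; exact absurd hrb hnab
    · exact h
  have hb : G.Adj (p (r + 1)) (p (r + 3)) := by
    rcases hrb with h | h
    · rw [h] at hra; exact absurd hra.symm hnab
    · exact h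
  refine chordal_sep hG ha hb hnab ?_
  have hT : ∀ s ≤ n, s ≠ r + 1 → s ≠ r + 2 →
      (¬ RR G (p (r + 1)) (p s) ∨ p s = p r ∨ p s = p (r + 3)) := by
    intro s hs h1 h2
    by_cases e1 : s = r
    · right; left; rw [e1]
    by_cases e2 : s = r + 3
    · right; right; rw [e2]
    exact Or.inl (hfar s hs (by omega))
  have hsym : ∀ x y, (RR G x y ∧ (¬ RR G (p (r + 1)) x ∨ x = p r ∨ x = p (r + 3)) ∧
      (¬ RR G (p (r + 1)) y ∨ y = p r ∨ y = p (r + 3))) →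
      (RR G y x ∧ (¬ RR G (p (r + 1)) y ∨ y = p r ∨ y = p (r + 3)) ∧
      (¬ RR G (p (r + 1)) x ∨ x = p r ∨ x = p (r + 3))) := fun x y h => ⟨h.1.symm, h.2.2, h.2.1⟩
  have c1 := chain_of_seq (fun x y => RR G x y ∧ (¬ RR G (p (r + 1)) x ∨ x = p r ∨ x = p (r + 3)) ∧
      (¬ RR G (p (r + 1)) y ∨ y = p r ∨ y = p (r + 3))) p i (r - i) (fun s hs =>
        ⟨hcons _ (by omega), hT _ (by omega) (by omega) (by omega), hT _ (by omega) (by omega) (by omega)⟩)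
  have c2 := chain_of_seq (fun x y => RR G x y ∧ (¬ RR G (p (r + 1)) x ∨ x = p r ∨ x = p (r + 3)) ∧
      (¬ RR G (p (r + 1)) y ∨ y = p r ∨ y = p (r + 3))) p (r + 3) (j - (r + 3)) (fun s hs =>
        ⟨hcons _ (by omega), hT _ (by omega) (by omega) (by omega), hT _ (by omega) (by omega) (by omega)⟩)
  rw [show i + (r - i) = r by omega] at c1
  rw [show r + 3 + (j - (r + 3)) = j by omega] at c2
  exact ((rev_chain hsym c1).tail ⟨hR, hT i (by omega) (by omega) (by omega),
    hT j (by omega) (by omega) (by omega)⟩).trans (rev_chain hsym c2)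

theorem wseq_of_bind {G : SimpleGraph V} (hG : Chordal G) (p : ℕ → V) (n : ℕ) (hB : BInd G p n)
    (h0 : SimpleVtx G (p 0)) (hn : SimpleVtx G (p n))
    (e1 : 2 ≤ n → RR G (p 0) (p 2) → p 0 = p 1 ∨ p 1 = p 2)
    (e2 : 2 ≤ n → RR G (p n) (p (n - 2)) → p n = p (n - 1) ∨ p (n - 1) = p (n - 2)) :
    WSeq G p n := by
  have hcons : ∀ s < n, RR G (p s) (p (s + 1)) := fun s hs =>
    (hB s (s + 1) (by omega) (by omega) (by omega)).mpr rfl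
  refine ⟨hcons, ?_⟩
  intro i j hij hj hR
  by_cases hco : ∃ t, i ≤ t ∧ t < j ∧ p t = p (t + 1)
  · obtain ⟨t, h1, h2, h3⟩ := hco
    exact Or.inr (bind_coincide hG p n hB i j t hij hj hR h1 h2 h3)
  push Not at hco
  have hpar : (j - i) % 2 = 0 := by
    by_contra hc
    have := (hB i j (by omega) hj (by omega)).mp hR
    omega
  refine Or.inl ⟨hpar, ?_, ?_, hco⟩
  · by_contra hi
    have hi0 : i = 0 := by omega
    subst hi0
    have h1 := h0.rr (hcons 0 (by omega)).symm hR.symm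
    have h2 := (hB (0 + 1) j (by omega) hj (by omega)).mp h1
    have h3 : j = 2 := by omega
    subst h3
    rcases e1 hj hR with h | h
    · exact hco 0 (by omega) (by omega) h
    · exact hco 1 (by omega) (by omega) h
  · by_contra hjn
    have hjn' : j = n := by omega
    subst hjn'
    have hc := hcons (j - 1) (by omega)
    rw [show j - 1 + 1 = j by omega] at hc
    have h1 := hn.rr hR hc
    have h2 := (hB i (j - 1) (by omega) (by omega) (by omega)).mp h1
    have h3 : j = i + 2 := by omega
    subst h3
    rcases e2 (by omega) hR.symm with h | h
    · exact hco (i + 1) (by omega) (by omega) h.symm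
    · exact hco i (by omega) (by omega) h.symm

/-- Half of a path, starting at `v`. -/
structure HalfP (G : SimpleGraph V) (v : V) (h : ℕ → V) (l : ℕ) : Prop where
  zero : h 0 = v
  pos : 1 ≤ l
  ind : BInd G h l
  simp : SimpleVtx G (h l)
  ne : v ≠ h l
  egood : 2 ≤ l → RR G (h l) (h (l - 2)) → h l = h (l - 1) ∨ h (l - 1) = h (l - 2)

theorem combine_halves {G : SimpleGraph V} (hG : Chordal G) (v : V) (h h' : ℕ → V) (l l' : ℕ)
    (H : HalfP G v h l) (H' : HalfP G v h' l')
    (cross : ∀ i j, 1 ≤ i → i ≤ l → 1 ≤ j → j ≤ l' → (i + j) % 2 = 1 → ¬ RR G (h i) (h' j))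
    (e1 : l = 1 → RR G (h 1) (h' 1) → h' 1 = v) (e2 : l' = 1 → RR G (h' 1) (h 1) → h 1 = v) :
    ∃ (a b : V) (w : G.Walk a b), IsEvenChorded G w ∧ SimpleVtx G a ∧ SimpleVtx G b ∧
      v ∈ w.support ∧ v ≠ a ∧ v ≠ b := by
  let p : ℕ → V := fun i => if i ≤ l then h (l - i) else h' (i - l)
  have hp1 : ∀ i ≤ l, p i = h (l - i) := fun i hi => by simp [p, hi]
  have hp2 : ∀ i, l ≤ i → p i = h' (i - l) := fun i hi => by
    by_cases e : i = l
    · subst e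
      rw [hp1 i le_rfl, Nat.sub_self, H.zero, H'.zero]
    · simp [p, show ¬ i ≤ l by omega]
  have hl := H.pos
  have hl' := H'.pos
  have hB : BInd G p (l + l') := by
    intro i j hij hj hpar
    by_cases h1 : j ≤ l
    · rw [hp1 i (by omega), hp1 j h1, RR.comm, H.ind (l - j) (l - i) (by omega) (by omega) (by omega)]
      omega
    by_cases h2 : l ≤ i
    · rw [hp2 i h2, hp2 j (by omega), H'.ind (i - l) (j - l) (by omega) (by omega) (by omega)]
      omega
    rw [hp1 i (by omega), hp2 j (by omega)]
    constructor
    · intro hr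
      exact absurd hr (cross _ _ (by omega) (by omega) (by omega) (by omega) (by omega))
    · intro hr; omega
  have hp0 : p 0 = h l := by rw [hp1 0 (by omega)]; rfl
  have hpn : p (l + l') = h' l' := by rw [hp2 _ (by omega)]; congr 1; omega
  have hpl : p l = v := by rw [hp1 l le_rfl, Nat.sub_self, H.zero]
  have hW := wseq_of_bind hG p (l + l') hB (by rw [hp0]; exact H.simp) (by rw [hpn]; exact H'.simp)
    (by
      intro _ hr
      by_cases hl2 : 2 ≤ l
      · rw [hp0, hp1 1 (by omega), hp1 2 (by omega)] at *
        exact H.egood hl2 hr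
      · have e : l = 1 := by omega
        subst e
        right
        rw [hp0, hp2 2 (by omega)] at hr
        rw [hpl, hp2 2 (by omega)]
        exact (e1 rfl hr).symm)
    (by
      intro _ hr
      by_cases hl2 : 2 ≤ l'
      · rw [hpn, hp2 (l + l' - 1) (by omega), hp2 (l + l' - 2) (by omega),
          show l + l' - 1 - l = l' - 1 by omega, show l + l' - 2 - l = l' - 2 by omega] at *
        exact H'.egood hl2 hr
      · have e : l' = 1 := by omega
        subst e
        right
        rw [hpn, hp1 (l + 1 - 2) (by omega), show l - (l + 1 - 2) = 1 by omega] at hr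
        rw [show l + 1 - 1 = l by omega, hpl, hp1 (l + 1 - 2) (by omega), show l - (l + 1 - 2) = 1 by omega]
        exact (e2 rfl hr).symm)
  obtain ⟨w, hw, hvw⟩ := wseq_final (l + l') p hW (h l) (h' l') v hp0 hpn l (by omega) hpl
  exact ⟨_, _, w, hw, H.simp, H'.simp, hvw, H.ne, H'.ne⟩

theorem shift_half {G : SimpleGraph V} {v : V} {h : ℕ → V} {l : ℕ} (H : HalfP G v h l)
    (hv : ∀ i, 2 ≤ i → i ≤ l → ¬ RR G v (h i)) : HalfP G v (fun i => h (i - 1)) (l + 1) where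
  zero := H.zero
  pos := by omega
  ind := by
    intro i j hij hj hpar
    show RR G (h (i - 1)) (h (j - 1)) ↔ _
    rcases i with _ | i
    · rw [show 0 - 1 = 0 from rfl, H.zero]
      by_cases hj1 : j = 1
      · subst hj1
        rw [show 1 - 1 = 0 from rfl, H.zero]
        simp [RR.refl]
      · have := hv (j - 1) (by omega) (by omega)
        constructor
        · intro hr; exact absurd hr this
        · intro hr; omega
    · rw [H.ind _ _ (by omega) (by omega) (by omega)]
      omega
  simp := H.simp
  ne := H.ne
  egood := by
    intro _ hr
    have hl := H.pos
    show h l = h (l + 1 - 1 - 1) ∨ h (l + 1 - 1 - 1) = h (l + 1 - 2 - 1)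
    by_cases h2 : 2 ≤ l
    · have := H.egood h2
      rw [show l + 1 - 1 - 1 = l - 1 by omega, show l + 1 - 2 - 1 = l - 2 by omega]
      refine this ?_
      have e : RR G (h l) (h (l + 1 - 2 - 1)) := hr
      rwa [show l + 1 - 2 - 1 = l - 2 by omega] at e
    · have : l = 1 := by omega
      subst this
      exact Or.inr rfl

/-- The step relation used on one side. -/
def sideStep (G : SimpleGraph V) (A D : Set V) (x x' : V) : Prop :=
  x' ∈ A ∧ ∃ t, (∀ d ∈ D, ¬ RR G t d) ∧ RR G x t ∧ RR G x' t

theorem half_exists {G : SimpleGraph V} (A D : Set V) (v a : V) (hvA : v ∉ A)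
    (hAD : ∀ x ∈ A, ∀ d ∈ D, ¬ RR G x d) (haA : a ∈ A) (ha : SimpleVtx G a)
    (hch : Relation.ReflTransGen (sideStep G A D) v a) :
    ∃ (h : ℕ → V) (l b : ℕ), HalfP G v h l ∧ (∀ i, 2 ≤ i → i ≤ l → ¬ RR G v (h i)) ∧
      (l + b) % 2 = 0 ∧ ∀ i, 1 ≤ i → i ≤ l →
        (((i + b) % 2 = 0 → h i ∈ A) ∧ ((i + b) % 2 = 1 → ∀ d ∈ D, ¬ RR G (h i) d)) := by
  classical
  obtain ⟨k, x, hx0, ⟨hxkA, hxks⟩, hE, hshort, hne, -, -⟩ :=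
    shortest_chain _ (fun x => x = v) (fun x => x ∈ A ∧ SimpleVtx G x) rfl ⟨haA, ha⟩ hch
  have hk : 1 ≤ k := by
    by_contra hc
    have : k = 0 := by omega
    subst this
    rw [hx0] at hxkA; exact hvA hxkA
  have hxA : ∀ i, 1 ≤ i → i ≤ k → x i ∈ A := by
    intro i h1 h2
    have := (hE (i - 1) (by omega)).1
    rwa [show i - 1 + 1 = i by omega] at this
  have hcht : ∀ i, ∃ t, i < k → (∀ d ∈ D, ¬ RR G t d) ∧ RR G (x i) t ∧ RR G (x (i + 1)) t ∧
      (1 ≤ i → RR G (x (i + 1)) (x i) → t = x i) := by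
    intro i
    by_cases hik : i < k
    · by_cases hc : 1 ≤ i ∧ RR G (x (i + 1)) (x i)
      · exact ⟨x i, fun _ => ⟨hAD _ (hxA i hc.1 (by omega)), RR.refl _, hc.2, fun _ _ => rfl⟩⟩
      · obtain ⟨-, t, h1, h2, h3⟩ := hE i hik
        exact ⟨t, fun _ => ⟨h1, h2, h3, fun h4 h5 => absurd ⟨h4, h5⟩ hc⟩⟩
    · exact ⟨v, fun h => absurd h hik⟩
  choose t ht using hcht
  have hxt : ∀ i j, i ≤ k → j < k → (RR G (x i) (t j) ↔ (i = j ∨ i = j + 1)) := by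
    intro i j hi hj
    obtain ⟨h1, h2, h3, -⟩ := ht j hj
    constructor
    · intro hr
      by_contra hc
      rcases Nat.lt_or_ge i j with hij | hij
      · exact hshort i (j + 1) (by omega) (by omega) ⟨hxA _ (by omega) (by omega), t j, h1, hr, h3⟩
      · exact hshort j i (by omega) (by omega) ⟨hxA _ (by omega) (by omega), t j, h1, h2, hr⟩
    · rintro (e | e)
      · rw [e]; exact h2
      · rw [e]; exact h3
  let u : ℕ → V := fun s => if s % 2 = 0 then x (s / 2) else t (s / 2)
  have hu0 : ∀ s, s % 2 = 0 → u s = x (s / 2) := fun s hs => by simp [u, hs]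
  have hu1 : ∀ s, s % 2 = 1 → u s = t (s / 2) := fun s hs => by simp [u, hs]
  have hBu : BInd G u (2 * k) := by
    intro i j hij hj hpar
    rcases Nat.mod_two_eq_zero_or_one i with e | e
    · rw [hu0 i e, hu1 j (by omega), hxt _ _ (by omega) (by omega)]
      omega
    · rw [hu1 i e, hu0 j (by omega), RR.comm, hxt _ _ (by omega) (by omega)]
      omega
  have huA : ∀ s, 2 ≤ s → s ≤ 2 * k → s % 2 = 0 → u s ∈ A := by
    intro s h1 h2 h3
    rw [hu0 s h3]; exact hxA _ (by omega) (by omega)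
  have huD : ∀ s, s ≤ 2 * k → s % 2 = 1 → ∀ d ∈ D, ¬ RR G (u s) d := by
    intro s h2 h3
    rw [hu1 s h3]; exact (ht (s / 2) (by omega)).1
  have hu2k : u (2 * k) = x k := by rw [hu0 _ (by omega)]; congr 1; omega
  have hu2k1 : u (2 * k - 1) = t (k - 1) := by rw [hu1 _ (by omega)]; congr 1; omega
  have hu2k2 : u (2 * k - 2) = x (k - 1) := by rw [hu0 _ (by omega)]; congr 1; omega
  have hvk : v ≠ x k := fun e => hvA (e ▸ hxkA)
  have hegu : 2 ≤ k → RR G (u (2 * k)) (u (2 * k - 2)) → u (2 * k - 1) = u (2 * k - 2) := by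
    intro h2 hr
    rw [hu2k, hu2k2] at hr
    rw [hu2k1, hu2k2]
    refine (ht (k - 1) (by omega)).2.2.2 (by omega) ?_
    rwa [show k - 1 + 1 = k by omega]
  have hvt : ∀ s, 2 ≤ s → s ≤ 2 * k → s % 2 = 1 → ¬ RR G v (u s) := by
    intro s h1 h2 h3 hr
    rw [hu1 s h3, ← hx0, hxt _ _ (by omega) (by omega)] at hr
    omega
  obtain ⟨J, hJk, hJ, hJmax⟩ : ∃ J ≤ k, RR G v (x J) ∧ ∀ i, J < i → i ≤ k → ¬ RR G v (x i) := by
    refine ⟨Nat.findGreatest (fun i => RR G v (x i)) k, Nat.findGreatest_le _, ?_, ?_⟩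
    · exact Nat.findGreatest_spec (P := fun i => RR G v (x i)) (Nat.zero_le k) (Or.inl hx0.symm)
    · intro i h1 h2
      exact Nat.findGreatest_is_greatest h1 h2
  by_cases hJ0 : J = 0
  · subst hJ0
    refine ⟨u, 2 * k, 0, ⟨?_, by omega, hBu, ?_, ?_, ?_⟩, ?_, by omega, ?_⟩
    · rw [hu0 0 rfl]; exact hx0
    · rw [hu2k]; exact hxks
    · rw [hu2k]; exact hvk
    · intro _ hr
      by_cases hk2 : 2 ≤ k
      · exact Or.inr (hegu hk2 hr)
      · exfalso
        have e : k = 1 := by omega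
        subst e
        rw [hu2k, hu2k2] at hr
        rw [show 1 - 1 = 0 from rfl, hx0] at hr
        exact hJmax 1 (by omega) le_rfl hr.symm
    · intro i h1 h2
      rcases Nat.mod_two_eq_zero_or_one i with e | e
      · rw [hu0 i e]; exact hJmax _ (by omega) (by omega)
      · exact hvt i h1 h2 e
    · intro i h1 h2
      exact ⟨fun e => huA i (by omega) h2 (by omega), fun e => huD i h2 (by omega)⟩
  · let h : ℕ → V := fun i => if i = 0 then v else u (2 * J - 1 + i)
    have hh0 : h 0 = v := by simp [h]
    have hh1 : ∀ i, 1 ≤ i → h i = u (2 * J - 1 + i) := fun i hi => by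
      simp [h, show i ≠ 0 by omega]
    have hhl : h (2 * k - 2 * J + 1) = u (2 * k) := by
      rw [hh1 _ (by omega)]; congr 1; omega
    refine ⟨h, 2 * k - 2 * J + 1, 1, ⟨hh0, by omega, ?_, ?_, ?_, ?_⟩, ?_, by omega, ?_⟩
    · intro i j hij hj hpar
      rcases i with _ | i
      · rw [hh0, hh1 j (by omega), hu0 _ (by omega)]
        constructor
        · intro hr
          by_contra hc
          exact hJmax _ (by omega) (by omega) hr
        · intro hr
          subst hr
          rw [show (2 * J - 1 + (0 + 1)) / 2 = J by omega]; exact hJ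
      · rw [hh1 _ (by omega), hh1 _ (by omega), hBu _ _ (by omega) (by omega) (by omega)]
        omega
    · rw [hhl, hu2k]; exact hxks
    · rw [hhl, hu2k]; exact hvk
    · intro hl hr
      right
      have e1 : h (2 * k - 2 * J + 1 - 1) = u (2 * k - 1) := by
        rw [hh1 _ (by omega)]; congr 1; omega
      have e2 : h (2 * k - 2 * J + 1 - 2) = u (2 * k - 2) := by
        rw [hh1 _ (by omega)]; congr 1; omega
      rw [e2, hhl] at hr
      rw [e1, e2]
      exact hegu (by omega) hr
    · intro i h1 h2
      rw [hh1 i (by omega)]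
      rcases Nat.mod_two_eq_zero_or_one (2 * J - 1 + i) with e | e
      · rw [hu0 _ e]; exact hJmax _ (by omega) (by omega)
      · exact hvt _ (by omega) (by omega) e
    · intro i h1 h2
      rw [hh1 i h1]
      exact ⟨fun e => huA _ (by omega) (by omega) (by omega), fun e => huD _ (by omega) (by omega)⟩

theorem sides_nonadj {G : SimpleGraph V} (hG : StronglyChordal G) {C : Set V} {y z : V}
    (hC : C = comNb G Set.univ y z) (hmax : MaxC G Set.univ Set.univ C) {x d : V}
    (hx : x ∈ sideOf G Set.univ Set.univ C y) (hd : d ∈ sideOf G Set.univ Set.univ C z) :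
    ¬ RR G x d := by
  intro hxd
  have hxz : ¬ RR G x z := fun h =>
    sideOf_disj hG hC hx (sideOf_base (sideOf_sub hx).1 h (sideOf_sub hx).2)
  have hCz : ∀ c ∈ C, RR G c z := fun c hc => by rw [hC] at hc; exact hc.2.2
  have hCx : ∀ c ∈ C, RR G c x := by
    by_contra hc
    push Not at hc
    exact sideOf_disj hG hC (sideOf_step hx ⟨sideOf_sub hx, sideOf_sub hd, x, trivial, hc,
      RR.refl _, hxd.symm⟩) hd
  have hC' : C = comNb G Set.univ x z := by
    ext c
    constructor
    · intro hc; exact ⟨trivial, hCx c hc, hCz c hc⟩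
    · intro hc
      exact hmax x trivial z trivial hCx hCz (fun h => hxz (h x trivial (RR.refl x)))
        (fun h => hxz (h z trivial (RR.refl z)).symm) c trivial hc.2.1 hc.2.2
  exact sideOf_disj hG hC' (sideOf_base (sideOf_sub hd).1 hxd.symm (sideOf_sub hd).2) hd

theorem side_half {G : SimpleGraph V} [Finite V] (hG : StronglyChordal G) {C : Set V} {v y z : V}
    (hC : C = comNb G Set.univ y z) (hmax : MaxC G Set.univ Set.univ C) (hv : v ∈ C)
    (hyz : ¬ nbLe G Set.univ y z) (hzy : ¬ nbLe G Set.univ z y) :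
    ∃ (h : ℕ → V) (l b : ℕ), HalfP G v h l ∧ (∀ i, 2 ≤ i → i ≤ l → ¬ RR G v (h i)) ∧
      (l + b) % 2 = 0 ∧ ∀ i, 1 ≤ i → i ≤ l →
        (((i + b) % 2 = 0 → h i ∈ sideOf G Set.univ Set.univ C y) ∧
        ((i + b) % 2 = 1 → ∀ d ∈ sideOf G Set.univ Set.univ C z, ¬ RR G (h i) d)) := by
  obtain ⟨a, ha, hN⟩ := lemmaK hG Set.univ Set.univ C y z hC trivial hyz hzy hmax
    (fun X1 _ => nest_exists hG X1)
  have has : SimpleVtx G a := by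
    intro s hs t ht
    rcases hN s trivial t trivial (mem_closedNbhd_iff.mp hs).symm (mem_closedNbhd_iff.mp ht).symm with h | h
    · exact Or.inl fun x hx => mem_closedNbhd_iff.mpr (h x trivial (mem_closedNbhd_iff.mp hx))
    · exact Or.inr fun x hx => mem_closedNbhd_iff.mpr (h x trivial (mem_closedNbhd_iff.mp hx))
  refine half_exists _ _ v a (fun h => (sideOf_sub h).2 hv)
    (fun x hx d hd => sides_nonadj hG hC hmax hx hd) ha has ?_
  obtain ⟨p, hp, hpy, hpC, hr⟩ := ha
  have hpA : p ∈ sideOf G Set.univ Set.univ C y := sideOf_base hp hpy hpC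
  have hvy : RR G v y := by rw [hC] at hv; exact hv.2.1
  refine Relation.ReflTransGen.head (b := p) ⟨hpA, y, ?_, hvy, hpy⟩ ?_
  · intro d hd hyd
    exact sideOf_disj hG hC (sideOf_base (sideOf_sub hd).1 hyd.symm (sideOf_sub hd).2) hd
  · clear has hN
    induction hr with
    | refl => exact Relation.ReflTransGen.refl
    | @tail b c hb hbc ih =>
      have hbA : b ∈ sideOf G Set.univ Set.univ C y := ⟨p, hp, hpy, hpC, hb⟩
      refine ih.tail ⟨sideOf_step hbA hbc, ?_⟩
      obtain ⟨h1, h2, t, htY, htC, h3, h4⟩ := hbc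
      refine ⟨t, ?_, h3, h4⟩
      intro d hd htd
      exact sideOf_disj hG hC (sideOf_step hbA ⟨h1, sideOf_sub hd, t, htY, htC, h3, htd.symm⟩) hd

/-- In a finite connected strongly chordal graph, every nonsimple vertex lies
as an internal vertex on an even-chorded path between two simple vertices. -/
theorem nonsimple_lies_on_even_chorded_path_between_simple
    {V : Type*} [Fintype V] (G : SimpleGraph V) (hconn : G.Connected)
    (hsc : StronglyChordal G) (v : V) (hv : ¬ SimpleVtx G v) :
    ∃ (a b : V) (w : G.Walk a b), IsEvenChorded G w ∧ SimpleVtx G a ∧ SimpleVtx G b ∧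
      v ∈ w.support ∧ v ≠ a ∧ v ≠ b := by
  have hex : ∃ y z, RR G v y ∧ RR G v z ∧ ¬ nbLe G Set.univ y z ∧ ¬ nbLe G Set.univ z y := by
    by_contra hc
    push Not at hc
    refine hv ?_
    intro y hy z hz
    by_cases h : nbLe G Set.univ y z
    · exact Or.inl fun x hx => mem_closedNbhd_iff.mpr (h x trivial (mem_closedNbhd_iff.mp hx))
    · have := hc y z (mem_closedNbhd_iff.mp hy).symm (mem_closedNbhd_iff.mp hz).symm h
      exact Or.inr fun x hx => mem_closedNbhd_iff.mpr (this x trivial (mem_closedNbhd_iff.mp hx))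
  obtain ⟨y0, z0, hy0, hz0, h1, h2⟩ := hex
  obtain ⟨y, -, z, -, hyz, hzy, hD, hmax⟩ :=
    exists_max_pair (G := G) Set.univ Set.univ {v} (y := y0) (z := z0) trivial trivial h1 h2
      (by rintro x rfl; exact ⟨trivial, hy0, hz0⟩)
  have hvC : v ∈ comNb G Set.univ y z := hD rfl
  obtain ⟨h, l, b, H, hHv, hpar, hside⟩ := side_half hsc rfl hmax hvC hyz hzy
  obtain ⟨h', l', b', H', hHv', hpar', hside'⟩ :=
    side_half hsc (C := comNb G Set.univ y z) (y := z) (z := y) (comNb_comm _ _ _) hmax hvC hzy hyz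
  have hl := H.pos
  have hl' := H'.pos
  have hcr : ∀ i j, 1 ≤ i → i ≤ l → 1 ≤ j → j ≤ l' → (i + b) % 2 ≠ (j + b') % 2 →
      ¬ RR G (h i) (h' j) := by
    intro i j h1 h2 h3 h4 hne hr
    rcases Nat.mod_two_eq_zero_or_one (i + b) with e | e
    · exact (hside' j h3 h4).2 (by omega) _ ((hside i h1 h2).1 e) hr.symm
    · exact (hside i h1 h2).2 e _ ((hside' j h3 h4).1 (by omega)) hr
  by_cases hbb : b % 2 = b' % 2
  · refine combine_halves hsc.1 v h h' l l' H H' ?_ ?_ ?_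
    · intro i j h1 h2 h3 h4 hp
      exact hcr i j h1 h2 h3 h4 (by omega)
    · intro e hr
      exact absurd hr (sides_nonadj hsc rfl hmax ((hside 1 le_rfl hl).1 (by omega))
        ((hside' 1 le_rfl hl').1 (by omega)))
    · intro e hr
      exact absurd hr.symm (sides_nonadj hsc rfl hmax ((hside 1 le_rfl hl).1 (by omega))
        ((hside' 1 le_rfl hl').1 (by omega)))
  · refine combine_halves hsc.1 v (fun i => h (i - 1)) h' (l + 1) l' (shift_half H hHv) H' ?_ ?_ ?_
    · intro i j h1 h2 h3 h4 hp
      show ¬ RR G (h (i - 1)) (h' j)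
      by_cases hi : i = 1
      · subst hi
        rw [show 1 - 1 = 0 from rfl, H.zero]
        exact hHv' j (by omega) h4
      · exact hcr (i - 1) j (by omega) (by omega) h3 h4 (by omega)
    · intro e; omega
    · intro _ _; exact H.zero
end
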